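/- Let n ∈ ℤ and let {f_j}_{j≥1} be a sequence in h^1_n(ℝ^d) with sup_j ‖f_j‖_{h^1_n} < ∞, and suppose f_j(x) → f(x) for almost every x ∈ ℝ^d. Then f ∈ h^1_n(ℝ^d), ‖f‖_{h^1_n} ≤ liminf_{j→∞} ‖f_j‖_{h^1_n}, and for every φ ∈ C_c^∞(ℝ^d), lim_{j→∞} ∫_{ℝ^d} f_j φ = ∫_{ℝ^d} f φ. -/

import Mathlib

open MeasureTheory Metric Real Filter Topology NNReal ENNReal

noncomputable section

abbrev E (d : ℕ) := EuclideanSpace ℝ (Fin d)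

/-- The auxiliary function ρ associated with the potential `V`. -/
def rho (d : ℕ) (V : E d → ℝ) (x : E d) : ℝ :=
  sSup {r : ℝ | 0 < r ∧ r ^ ((2:ℝ) - (d:ℝ)) * (∫ y in ball x r, V y) ≤ 1}

/-- The reverse Hölder class `RH_{d/2}`. -/
def IsRH (d : ℕ) (V : E d → ℝ) : Prop :=
  ∃ C : ℝ, 0 < C ∧ ∀ (x : E d) (r : ℝ), 0 < r →
    ((volume (ball x r)).toReal⁻¹ * ∫ y in ball x r, (V y) ^ ((d:ℝ)/2)) ^ ((2:ℝ)/(d:ℝ)) ≤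
      C * ((volume (ball x r)).toReal⁻¹ * ∫ y in ball x r, V y)

/-- The set `𝓑_n = {x : 2^{-(n+1)/2} < ρ(x) ≤ 2^{-n/2}}`. -/
def Bset (d : ℕ) (V : E d → ℝ) (n : ℤ) : Set (E d) :=
  {x | (2:ℝ) ^ (-((n:ℝ)+1)/2) < rho d V x ∧ rho d V x ≤ (2:ℝ) ^ (-(n:ℝ)/2)}

/-- Average of `f` over the ball `B(x,r)`. -/
def ballAvg (d : ℕ) (f : E d → ℝ) (x : E d) (r : ℝ) : ℝ :=
  (volume (ball x r)).toReal⁻¹ * ∫ y in ball x r, f y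

/-- Mean oscillation of `f` over the ball `B(x,r)`. -/
def oscB (d : ℕ) (f : E d → ℝ) (x : E d) (r : ℝ) : ℝ :=
  ballAvg d (fun y => |f y - ballAvg d f x r|) x r

/-- The BMO seminorm, as an extended nonnegative real. -/
def bmoNormE (d : ℕ) (f : E d → ℝ) : ℝ≥0∞ :=
  ⨆ (x : E d) (r : ℝ) (_ : 0 < r), ENNReal.ofReal (oscB d f x r)

/-- The `bmo_n` norm, as an extended nonnegative real. -/
def bmonNorm (d : ℕ) (n : ℤ) (f : E d → ℝ) : ℝ≥0∞ :=
  bmoNormE d f +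
    ⨆ (x : E d) (r : ℝ) (_ : (2:ℝ) ^ (-(n:ℝ)/2) ≤ r),
      ENNReal.ofReal (ballAvg d (fun y => |f y|) x r)

/-- The `BMO_L` norm, as an extended nonnegative real. -/
def bmoLNorm (d : ℕ) (V : E d → ℝ) (f : E d → ℝ) : ℝ≥0∞ :=
  bmoNormE d f +
    ⨆ (x : E d) (r : ℝ) (_ : rho d V x ≤ r),
      ENNReal.ofReal (ballAvg d (fun y => |f y|) x r)

/-- The Gauss function `P(x) = (4π)^{-d/2} e^{-|x|²/4}`. -/
def gaussP (d : ℕ) (x : E d) : ℝ := (4 * π) ^ (-(d:ℝ)/2) * Real.exp (-(‖x‖^2)/4)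

/-- The local maximal function `𝓜_n f(x) = sup_{0<t<2^{-n/2}} |P_t * f(x)|`. -/
def MnMax (d : ℕ) (n : ℤ) (f : E d → ℝ) (x : E d) : ℝ≥0∞ :=
  ⨆ (t : ℝ) (_ : 0 < t ∧ t < (2:ℝ) ^ (-(n:ℝ)/2)),
    ENNReal.ofReal |∫ z, t ^ (-(d:ℝ)) * gaussP d (t⁻¹ • (x - z)) * f z|

/-- The `h^1_n` norm `‖𝓜_n f‖_{L¹}`, as an extended nonnegative real. -/
def h1nNorm (d : ℕ) (n : ℤ) (f : E d → ℝ) : ℝ≥0∞ := ∫⁻ x, MnMax d n f x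

/-- Membership in the local Hardy space `h^1_n`. -/
def Memh1n (d : ℕ) (n : ℤ) (f : E d → ℝ) : Prop :=
  Integrable f volume ∧ h1nNorm d n f < ⊤

/-- `(H^1_L, q)`-atoms related to the ball `B(x₀, r)`, with `L`-constant `CL`. -/
def IsHLAtom (d : ℕ) (V : E d → ℝ) (CL : ℝ) (q : ℝ≥0∞) (a : E d → ℝ) (x₀ : E d) (r : ℝ) :
    Prop :=
  r ≤ CL * rho d V x₀ ∧ Function.support a ⊆ ball x₀ r ∧
    eLpNorm a q volume ≤ (volume (ball x₀ r)) ^ (1 / q.toReal - 1) ∧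
    (r ≤ rho d V x₀ / CL → (∫ x, a x) = 0)

/-
Each `f_j` is bounded by some `λ` off an open set `O = {D > 0}`, where `D ≥ 0` is 1-Lipschitz, `λ`
is bounded in `j` and `λ |O|` is as small as desired. By dominated convergence off `O`, everything
rests on the estimate `|∫_O f φ| ≤ C (λ ‖φ‖_∞ |O| + r Lip(φ) ‖f‖₁)`, valid when `D < r`. It follows
by telescoping `∫_{D < r_k} φ e^{r_k² Δ} f` over the scales `r_k = r / 2 ^ k`: this is
`∫ φ e^{r² Δ} f ≈ ∫ φ f` for `k = 0` and tends to `∫_{D = 0} φ f`, while consecutive terms differ by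
integrals concentrated near `{D ≈ r_k}`, where `e^{r_k² Δ} f` is at most a multiple of `λ`.

The bound `|e^{r_k² Δ} f| ≤ λ (1 + D / r_k) ^ p` behind this comes from dominating the tangential
heat maximal function by the square of the Hardy–Littlewood maximal function of `(𝓜_n f) ^ (1/2)`.
The latter is in `L²` with norm controlled by `‖𝓜_n f‖₁`, so among `N` dyadic levels one has
`λ |O| ≲ ‖𝓜_n f‖₁ / N`. Testing against heat kernels gives convergence of `P_t * f_j`, and then
Fatou's lemma gives the norm inequality.
-/

lemma sum_two_pow_indicator_le (n : ℕ) (b : ℝ≥0∞) :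
    ∑ i ∈ Finset.range n, (if 2 ^ i < b then (2 : ℝ≥0∞) ^ i else 0) ≤ 2 * b := by
  induction n with
  | zero => simp
  | succ n ih =>
    by_cases hb : (2 : ℝ≥0∞) ^ n < b
    · have hle : ∀ i ∈ Finset.range (n + 1),
          (if 2 ^ i < b then (2 : ℝ≥0∞) ^ i else 0) ≤ ((2 ^ i : ℕ) : ℝ≥0∞) := fun i _ ↦ by
        split_ifs <;> simp
      calc _ ≤ ((∑ i ∈ Finset.range (n + 1), 2 ^ i : ℕ) : ℝ≥0∞) := by
            push_cast; exact Finset.sum_le_sum fun i hi ↦ by simpa using hle i hi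
        _ ≤ ((2 * 2 ^ n : ℕ) : ℝ≥0∞) := by
            have := Nat.geomSum_lt (m := 2) (s := Finset.range (n + 1)) (n := n + 1) le_rfl
              (by simp)
            exact_mod_cast (this.le.trans_eq (pow_succ' 2 n))
        _ ≤ 2 * b := by push_cast; gcongr
    · rw [Finset.sum_range_succ, if_neg hb, add_zero]
      exact ih

lemma exists_lt_two_pow_inv_one_add_pow_le {τ : ℝ} (hτ : 0 ≤ τ) (p : ℕ) :
    ∃ n : ℕ, τ < 2 ^ n ∧ ((1 + τ) ^ p)⁻¹ ≤ 2 ^ p * ((2 ^ p)⁻¹) ^ n := by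
  obtain ⟨n, hn, hn'⟩ := exists_nat_pow_near (x := 1 + τ) (y := (2 : ℝ)) (by linarith) one_lt_two
  refine ⟨n + 1, by linarith, ?_⟩
  calc ((1 + τ) ^ p)⁻¹ ≤ ((2 ^ n) ^ p)⁻¹ := by gcongr
    _ = 2 ^ p * ((2 ^ p)⁻¹) ^ (n + 1) := by
      rw [pow_succ, inv_pow, ← pow_mul, ← pow_mul, mul_comm n p]
      field_simp

section MaximalFunction

variable {V : Type*} [NormedAddCommGroup V] [MeasurableSpace V] {μ : Measure V}

/-- The centred Hardy–Littlewood maximal function of a nonnegative function. -/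
def hlMaximal (μ : Measure V) (g : V → ℝ≥0∞) (x : V) : ℝ≥0∞ :=
  ⨆ (r : ℝ) (_ : 0 < r), ⨍⁻ y in ball x r, g y ∂μ

lemma setLAverage_ball_le_hlMaximal (g : V → ℝ≥0∞) (x : V) {r : ℝ} (hr : 0 < r) :
    ⨍⁻ y in ball x r, g y ∂μ ≤ hlMaximal μ g x :=
  le_iSup₂_of_le r hr le_rfl

variable [NormedSpace ℝ V] [FiniteDimensional ℝ V] [μ.IsAddHaarMeasure]

lemma setLIntegral_ball_le_hlMaximal (g : V → ℝ≥0∞) (x : V) {r : ℝ} (hr : 0 < r) :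
    ∫⁻ y in ball x r, g y ∂μ ≤ μ (ball x r) * hlMaximal μ g x := by
  rw [← measure_mul_setLAverage g measure_ball_lt_top.ne]
  gcongr
  exact setLAverage_ball_le_hlMaximal g x hr

lemma exists_lt_setLIntegral_ball_of_lt_hlMaximal {g : V → ℝ≥0∞} {x : V} {a : ℝ≥0∞}
    (h : a < hlMaximal μ g x) : ∃ r > 0, a * μ (ball x r) < ∫⁻ y in ball x r, g y ∂μ := by
  simp only [hlMaximal, lt_iSup_iff] at h
  obtain ⟨r, hr, h⟩ := h
  refine ⟨r, hr, ?_⟩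
  rwa [setLAverage_eq, ENNReal.lt_div_iff_mul_lt (.inl (measure_ball_pos μ x hr).ne')
    (.inl measure_ball_lt_top.ne)] at h

lemma hlMaximal_le_hlMaximal_add {g h : V → ℝ≥0∞} {a : ℝ≥0∞} (hgh : ∀ y, g y ≤ h y + a) (x : V) :
    hlMaximal μ g x ≤ hlMaximal μ h x + a := by
  refine iSup₂_le fun r hr ↦ ?_
  have hμ₀ : μ (ball x r) ≠ 0 := (measure_ball_pos μ x hr).ne'
  calc ⨍⁻ y in ball x r, g y ∂μ
      ≤ ⨍⁻ y in ball x r, (h y + a) ∂μ := lintegral_mono hgh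
    _ = ⨍⁻ y in ball x r, h y ∂μ + a := by
        rw [setLAverage_eq, setLAverage_eq, lintegral_add_right _ measurable_const,
          setLIntegral_const, ENNReal.add_div,
          ENNReal.mul_div_cancel_right hμ₀ measure_ball_lt_top.ne]
    _ ≤ hlMaximal μ h x + a := by
        gcongr
        exact setLAverage_ball_le_hlMaximal h x hr

variable [BorelSpace V] [Nontrivial V]

lemma exists_forall_radius_le {a b : ℝ≥0∞} (ha : a ≠ 0) (hb : b ≠ ∞) :
    ∃ R : ℝ, ∀ (x : V) (r : ℝ), a * μ (ball x r) ≤ b → r ≤ R := by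
  set c := a * μ (ball 0 1) with hc
  have hc₀ : c ≠ 0 := mul_ne_zero ha (measure_ball_pos μ 0 one_pos).ne'
  refine ⟨max 1 (b / c).toReal, fun x r h ↦ ?_⟩
  rcases le_total r 1 with hr | hr
  · exact hr.trans (le_max_left _ _)
  refine le_max_of_le_right ?_
  rw [← ENNReal.ofReal_le_iff_le_toReal (ENNReal.div_ne_top hb hc₀)]
  refine ENNReal.le_div_iff_mul_le (.inl hc₀) (.inr hb) |>.2 (le_trans ?_ h)
  rw [Measure.addHaar_ball _ _ (zero_le_one.trans hr), hc, mul_left_comm]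
  gcongr
  exact le_self_pow₀ hr Module.finrank_pos.ne'

lemma mul_meas_lt_hlMaximal_le (g : V → ℝ≥0∞) (a : ℝ≥0∞) :
    a * μ {x | a < hlMaximal μ g x} ≤ 5 ^ Module.finrank ℝ V * ∫⁻ x, g x ∂μ := by
  rcases eq_or_ne a 0 with rfl | ha
  · simp
  rcases eq_or_ne (∫⁻ x, g x ∂μ) ∞ with hg | hg
  · simp [hg]
  choose! r hr₀ hr using fun x (hx : x ∈ {x | a < hlMaximal μ g x}) ↦
    exists_lt_setLIntegral_ball_of_lt_hlMaximal hx
  obtain ⟨R, hR⟩ := exists_forall_radius_le (V := V) (μ := μ) ha hg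
  obtain ⟨u, hu, hdisj, hcov⟩ := Vitali.exists_disjoint_subfamily_covering_enlargement_closedBall
    {x | a < hlMaximal μ g x} id r R
    (fun x hx ↦ hR x _ ((hr x hx).le.trans (setLIntegral_le_lintegral _ _))) 5 (by norm_num)
  have hdisj' : u.PairwiseDisjoint fun x ↦ ball x (r x) :=
    hdisj.mono fun x ↦ ball_subset_closedBall
  have hcount : u.Countable := hdisj'.countable_of_isOpen (fun _ _ ↦ isOpen_ball)
    fun x hx ↦ ⟨x, mem_ball_self (hr₀ x (hu hx))⟩
  have hsub : {x | a < hlMaximal μ g x} ⊆ ⋃ x ∈ u, closedBall x (5 * r x) := fun x hx ↦ by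
    obtain ⟨y, hy, hxy⟩ := hcov x hx
    exact Set.mem_biUnion hy (hxy (mem_closedBall_self (hr₀ x hx).le))
  calc a * μ {x | a < hlMaximal μ g x}
      ≤ a * ∑' x : u, μ (closedBall (x : V) (5 * r x)) := by
        gcongr
        exact (measure_mono hsub).trans (measure_biUnion_le _ hcount _)
    _ = ∑' x : u, 5 ^ Module.finrank ℝ V * (a * μ (ball (x : V) (r x))) := by
        rw [← ENNReal.tsum_mul_left]
        congr with x
        rw [Measure.addHaar_closedBall_mul μ _ (by norm_num) (hr₀ _ (hu x.2)).le,
          Measure.addHaar_closedBall_eq_addHaar_ball, Measure.addHaar_ball_center μ x,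
          ENNReal.ofReal_pow (by norm_num), ENNReal.ofReal_ofNat, mul_left_comm]
    _ ≤ ∑' x : u, 5 ^ Module.finrank ℝ V * ∫⁻ y in ball (x : V) (r x), g y ∂μ := by
        gcongr with x
        exact (hr _ (hu x.2)).le
    _ = 5 ^ Module.finrank ℝ V * ∫⁻ y in ⋃ x ∈ u, ball x (r x), g y ∂μ := by
        rw [ENNReal.tsum_mul_left, lintegral_biUnion hcount (fun _ _ ↦ measurableSet_ball) hdisj']
    _ ≤ 5 ^ Module.finrank ℝ V * ∫⁻ x, g x ∂μ := by
        gcongr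
        exact Measure.restrict_le_self

lemma mul_meas_two_mul_lt_hlMaximal_le {g : V → ℝ≥0∞} (hg : Measurable g) {a : ℝ≥0∞}
    (ha : a ≠ ∞) :
    a * μ {x | 2 * a < hlMaximal μ g x} ≤
      5 ^ Module.finrank ℝ V * ∫⁻ x in {x | a < g x}, g x ∂μ := by
  set h := {x | a < g x}.indicator g with hh
  have hgh (y : V) : g y ≤ h y + a := by
    by_cases hy : a < g y
    · simp [hh, hy]
    · exact (not_lt.1 hy).trans le_add_self
  have hsub : {x | 2 * a < hlMaximal μ g x} ⊆ {x | a < hlMaximal μ h x} := fun x hx ↦ by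
    have := hx.trans_le (hlMaximal_le_hlMaximal_add hgh x)
    rwa [two_mul, ENNReal.add_lt_add_iff_right ha] at this
  calc a * μ {x | 2 * a < hlMaximal μ g x}
      ≤ a * μ {x | a < hlMaximal μ h x} := by gcongr
    _ ≤ 5 ^ Module.finrank ℝ V * ∫⁻ x, h x ∂μ := mul_meas_lt_hlMaximal_le h a
    _ = _ := by rw [lintegral_indicator (measurableSet_lt measurable_const hg)]

lemma sum_four_pow_mul_meas_lt_hlMaximal_le {g : V → ℝ≥0∞} (hg : Measurable g) (n : ℕ) :
    ∑ i ∈ Finset.range n, 4 ^ i * μ {x | 2 * 2 ^ i < hlMaximal μ g x} ≤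
      2 * 5 ^ Module.finrank ℝ V * ∫⁻ x, g x ^ 2 ∂μ := by
  have hmeas (i : ℕ) : MeasurableSet {x | (2 : ℝ≥0∞) ^ i < g x} :=
    measurableSet_lt measurable_const hg
  have hterm : ∀ i ∈ Finset.range n, Measurable fun x ↦
      (if 2 ^ i < g x then (2 : ℝ≥0∞) ^ i else 0) * g x := fun i _ ↦
    (Measurable.ite (hmeas i) measurable_const measurable_const).mul hg
  calc ∑ i ∈ Finset.range n, 4 ^ i * μ {x | 2 * 2 ^ i < hlMaximal μ g x}
      ≤ ∑ i ∈ Finset.range n,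
          2 ^ i * (5 ^ Module.finrank ℝ V * ∫⁻ x in {x | 2 ^ i < g x}, g x ∂μ) := by
        refine Finset.sum_le_sum fun i _ ↦ ?_
        rw [show (4 : ℝ≥0∞) = 2 * 2 by norm_num, mul_pow, mul_assoc]
        gcongr 2 ^ i * ?_
        exact mul_meas_two_mul_lt_hlMaximal_le hg (by finiteness)
    _ = 5 ^ Module.finrank ℝ V *
          ∫⁻ x, ∑ i ∈ Finset.range n, (if 2 ^ i < g x then (2 : ℝ≥0∞) ^ i else 0) * g x ∂μ := by
        rw [lintegral_finsetSum _ hterm, Finset.mul_sum]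
        refine Finset.sum_congr rfl fun i _ ↦ ?_
        rw [mul_left_comm, ← lintegral_indicator (hmeas i),
          ← lintegral_const_mul _ (hg.indicator (hmeas i))]
        congr with x
        simp [Set.indicator_apply]
    _ ≤ 5 ^ Module.finrank ℝ V * ∫⁻ x, 2 * g x ^ 2 ∂μ := by
        gcongr with x
        rw [← Finset.sum_mul, pow_two, ← mul_assoc]
        gcongr
        exact sum_two_pow_indicator_le n (g x)
    _ = 2 * 5 ^ Module.finrank ℝ V * ∫⁻ x, g x ^ 2 ∂μ := by
        rw [lintegral_const_mul _ (hg.pow_const 2)]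
        ring

lemma mul_setLIntegral_ball_two_pow_mul_le (g : V → ℝ≥0∞) (x : V) {ρ : ℝ} (hρ : 0 < ρ) (i : ℕ) :
    ((2 ^ (Module.finrank ℝ V + 1))⁻¹) ^ i * ∫⁻ y in ball x (2 ^ i * ρ), g y ∂μ ≤
      2⁻¹ ^ i * (μ (ball x ρ) * hlMaximal μ g x) := by
  set d := Module.finrank ℝ V
  have hdim : (((2 : ℝ≥0∞) ^ (d + 1))⁻¹) ^ i * (2 ^ i) ^ d = 2⁻¹ ^ i := by
    rw [pow_succ, ENNReal.mul_inv (by simp) (by simp), mul_pow, mul_right_comm, ← pow_mul,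
      mul_comm i d, pow_mul, ← mul_pow, ENNReal.inv_mul_cancel (by simp) (by finiteness), one_pow,
      one_mul]
  calc _ ≤ ((2 ^ (d + 1))⁻¹) ^ i * (μ (ball x (2 ^ i * ρ)) * hlMaximal μ g x) := by
        gcongr
        exact setLIntegral_ball_le_hlMaximal g x (by positivity)
    _ = _ := by
        rw [Measure.addHaar_ball_mul μ _ (by positivity), Measure.addHaar_ball_center μ x,
          ENNReal.ofReal_pow (by positivity), ENNReal.ofReal_pow zero_le_two,
          ENNReal.ofReal_ofNat, ← hdim]
        ring

lemma lintegral_inv_one_add_pow_mul_le {g : V → ℝ≥0∞} (hg : Measurable g) (x : V) {ρ : ℝ}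
    (hρ : 0 < ρ) :
    ∫⁻ y, ENNReal.ofReal (((1 + ‖x - y‖ / ρ) ^ (Module.finrank ℝ V + 1))⁻¹) * g y ∂μ ≤
      2 ^ (Module.finrank ℝ V + 2) * μ (ball x ρ) * hlMaximal μ g x := by
  set d := Module.finrank ℝ V
  set c : ℕ → ℝ≥0∞ := fun i ↦ 2 ^ (d + 1) * ((2 ^ (d + 1))⁻¹) ^ i
  have hshell (y : V) : ENNReal.ofReal (((1 + ‖x - y‖ / ρ) ^ (d + 1))⁻¹) * g y ≤
      ∑' i, c i * (ball x (2 ^ i * ρ)).indicator g y := by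
    obtain ⟨n, hn, hle⟩ :=
      exists_lt_two_pow_inv_one_add_pow_le (τ := ‖x - y‖ / ρ) (by positivity) (d + 1)
    refine le_trans ?_ (ENNReal.le_tsum n)
    rw [Set.indicator_of_mem (by rwa [mem_ball', dist_eq_norm, ← div_lt_iff₀ hρ])]
    gcongr
    refine (ENNReal.ofReal_le_ofReal hle).trans_eq ?_
    rw [ENNReal.ofReal_mul (by positivity), ENNReal.ofReal_pow zero_le_two,
      ENNReal.ofReal_pow (by positivity), ENNReal.ofReal_inv_of_pos (by positivity),
      ENNReal.ofReal_pow zero_le_two, ENNReal.ofReal_ofNat]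
  calc _ ≤ ∫⁻ y, ∑' i, c i * (ball x (2 ^ i * ρ)).indicator g y ∂μ := lintegral_mono hshell
    _ = ∑' i, c i * ∫⁻ y in ball x (2 ^ i * ρ), g y ∂μ := by
        rw [lintegral_tsum fun i ↦ ((hg.indicator measurableSet_ball).const_mul _).aemeasurable]
        congr with i
        rw [lintegral_const_mul _ (hg.indicator measurableSet_ball),
          lintegral_indicator measurableSet_ball]
    _ ≤ ∑' i, 2 ^ (d + 1) * (2⁻¹ ^ i * (μ (ball x ρ) * hlMaximal μ g x)) :=
        ENNReal.tsum_le_tsum fun i ↦ (mul_assoc _ _ _).trans_le <|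
          mul_le_mul' le_rfl (mul_setLIntegral_ball_two_pow_mul_le g x hρ i)
    _ = 2 ^ (d + 2) * μ (ball x ρ) * hlMaximal μ g x := by
        rw [ENNReal.tsum_mul_left, ENNReal.tsum_mul_right, ENNReal.tsum_geometric,
          ENNReal.one_sub_inv_two, inv_inv]
        ring

end MaximalFunction

lemma exists_forall_abs_setIntegral_lt {α : Type*} [MeasurableSpace α] {μ : Measure α} {g : α → ℝ}
    (hg : Integrable g μ) {ε : ℝ} (hε : 0 < ε) :
    ∃ δ > 0, ∀ s, μ s ≤ ENNReal.ofReal δ → |∫ x in s, g x ∂μ| < ε := by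
  obtain ⟨δ, hδ, h⟩ := exists_pos_setLIntegral_lt_of_measure_lt hg.hasFiniteIntegral.ne
    (ENNReal.ofReal_pos.2 hε).ne'
  obtain ⟨δ', -, hδ', hδ'δ⟩ := ENNReal.lt_iff_exists_real_btwn.1 hδ
  refine ⟨δ', ENNReal.ofReal_pos.1 hδ', fun s hs ↦ ?_⟩
  have := (enorm_integral_le_lintegral_enorm (μ := μ.restrict s) g).trans_lt
    (h s (hs.trans_lt hδ'δ))
  rwa [enorm_eq_ofReal_abs, ENNReal.ofReal_lt_ofReal_iff hε] at this

lemma tendsto_integral_of_dominated_off_small {α : Type*} [MeasurableSpace α] {μ : Measure α}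
    {F : ℕ → α → ℝ} {f : α → ℝ} (hF : ∀ j, Integrable (F j) μ) (hf : Integrable f μ)
    (hlim : ∀ᵐ x ∂μ, Tendsto (fun j ↦ F j x) atTop (𝓝 (f x)))
    (hdom : ∀ ε > 0, ∃ g : α → ℝ, Integrable g μ ∧ ∀ j, ∃ O, MeasurableSet O ∧
      μ O ≤ ENNReal.ofReal ε ∧ (∀ᵐ x ∂μ, x ∉ O → |F j x| ≤ g x) ∧ |∫ x in O, F j x ∂μ| ≤ ε) :
    Tendsto (fun j ↦ ∫ x, F j x ∂μ) atTop (𝓝 (∫ x, f x ∂μ)) := by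
  rw [Metric.tendsto_atTop']
  intro ε hε
  obtain ⟨δ, hδ, hfδ⟩ := exists_forall_abs_setIntegral_lt hf (by positivity : 0 < ε / 3)
  obtain ⟨g, hg, h⟩ := hdom (min δ (ε / 3)) (by positivity)
  choose O hO hOμ hOg hOF using h
  have hoff : Tendsto (fun j ↦ ∫ x, (O j)ᶜ.indicator (F j - f) x ∂μ) atTop (𝓝 0) := by
    rw [← integral_zero α ℝ (μ := μ)]
    refine tendsto_integral_of_dominated_convergence (fun x ↦ |g x| + |f x|)
      (fun j ↦ ((hF j).sub hf).aestronglyMeasurable.indicator (hO j).compl)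
      (hg.abs.add hf.abs) (fun j ↦ ?_) ?_
    · filter_upwards [hOg j] with x hx
      by_cases hxO : x ∈ O j
      · simpa [hxO] using by positivity
      · simpa [hxO] using (abs_sub _ _).trans
          (add_le_add_left ((hx hxO).trans (le_abs_self _)) |f x|)
    · filter_upwards [hlim] with x hx
      refine squeeze_zero_norm (fun j ↦ norm_indicator_le_norm_self _ x) ?_
      simpa using (hx.sub_const (f x)).norm
  obtain ⟨J, hJ⟩ := (Metric.tendsto_atTop'.1 hoff) (ε / 3) (by positivity)
  refine ⟨J, fun j hj ↦ ?_⟩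
  have hsplit : ∫ x, F j x ∂μ - ∫ x, f x ∂μ =
      ∫ x in O j, F j x ∂μ - ∫ x in O j, f x ∂μ + ∫ x, (O j)ᶜ.indicator (F j - f) x ∂μ := by
    rw [integral_indicator (hO j).compl, ← integral_sub (hF j) hf,
      ← integral_sub (hF j).integrableOn hf.integrableOn]
    exact (integral_add_compl (hO j) ((hF j).sub hf)).symm
  have h₁ := (hOF j).trans (min_le_right _ _)
  have h₂ := hfδ (O j) ((hOμ j).trans (ENNReal.ofReal_le_ofReal (min_le_left _ _)))
  have h₃ := hJ j hj
  rw [dist_zero_right, norm_eq_abs] at h₃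
  rw [Real.dist_eq, hsplit, abs_lt]
  rw [abs_le] at h₁
  rw [abs_lt] at h₂ h₃
  constructor <;> linarith [h₁.1, h₁.2, h₂.1, h₂.2, h₃.1, h₃.2]

lemma le_mul_of_sq_le_mul_succ {x : ℕ → ℝ} {A B c : ℝ} (hx : ∀ k, 0 ≤ x k) (hA : 0 ≤ A)
    (hc : 1 ≤ c) (hB : ∀ k, x k ≤ B * c ^ k) (hstep : ∀ k, x k ^ 2 ≤ A * x (k + 1)) (n : ℕ) :
    x n ≤ A * c := by
  have : 0 < c := by linarith
  set y : ℕ → ℝ := fun k ↦ x (n + k) / c ^ k with hy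
  have hbdd : BddAbove (Set.range y) := by
    refine ⟨B * c ^ n, Set.forall_mem_range.2 fun k ↦ ?_⟩
    rw [div_le_iff₀ (by positivity), mul_assoc, ← pow_add]
    exact hB _
  set W := ⨆ k, y k
  have hW₀ : 0 ≤ W := (hx n).trans (by simpa [hy] using le_ciSup hbdd 0)
  have hyW (k : ℕ) : y k ≤ √(A * c * W) := by
    refine le_sqrt_of_sq_le ?_
    have hk : x (n + k + 1) ≤ W * c ^ (k + 1) :=
      (div_le_iff₀ (by positivity)).1 (le_ciSup hbdd (k + 1))
    calc y k ^ 2 = x (n + k) ^ 2 / (c ^ k) ^ 2 := div_pow _ _ _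
      _ ≤ A * (W * c ^ (k + 1)) / (c ^ k) ^ 2 := by
        gcongr
        exact (hstep _).trans (by gcongr)
      _ = A * c * W / c ^ k := by rw [pow_succ]; field_simp
      _ ≤ A * c * W := div_le_self (by positivity) (one_le_pow₀ hc)
  have hWW : W ^ 2 ≤ A * c * W :=
    (le_sqrt hW₀ (by positivity)).1 (ciSup_le hyW)
  have hWA : W ≤ A * c := by
    rcases hW₀.eq_or_lt with h | h
    · rw [← h]; positivity
    · exact le_of_mul_le_mul_right (by rwa [← pow_two]) h
  exact le_trans (by simpa [hy] using le_ciSup hbdd 0) hWA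

lemma sum_div_two_pow_le_min {r D : ℝ} (hr : 0 ≤ r) (hD : 0 < D) (n : ℕ) :
    ∑ k ∈ Finset.range n, (if r / 2 ^ k ≤ D then r / 2 ^ k / D else 0) ≤ 2 * (min r D / D) := by
  induction n generalizing r with
  | zero => simp only [Finset.range_zero, Finset.sum_empty]; positivity
  | succ n ih =>
    have hshift (k : ℕ) : r / 2 ^ (k + 1) = r / 2 / 2 ^ k := by rw [pow_succ', div_div]
    simp only [Finset.sum_range_succ', hshift, pow_zero, div_one]
    have hih := ih (by positivity : 0 ≤ r / 2)
    split_ifs with h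
    · rw [min_eq_left (by linarith)] at hih
      rw [min_eq_left h]
      linarith [div_right_comm r 2 D]
    · rw [add_zero]
      refine hih.trans ?_
      gcongr
      linarith

section HeatKernel

open Module

variable {V : Type*} [NormedAddCommGroup V] [InnerProductSpace ℝ V]

/-- The Gauss–Weierstrass kernel, i.e. the fundamental solution at time `s` of `∂ₛu = Δu`. -/
def heatKernel (s : ℝ) (v : V) : ℝ :=
  (4 * π * s) ^ (-(finrank ℝ V : ℝ) / 2) * exp (-‖v‖ ^ 2 / (4 * s))

lemma heatKernel_nonneg {s : ℝ} (hs : 0 < s) (v : V) : 0 ≤ heatKernel s v := by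
  unfold heatKernel; positivity

lemma heatKernel_le {s : ℝ} (hs : 0 < s) (v : V) :
    heatKernel s v ≤ (4 * π * s) ^ (-(finrank ℝ V : ℝ) / 2) := by
  refine mul_le_of_le_one_right (by positivity) (exp_le_one_iff.2 ?_)
  rw [neg_div, Left.neg_nonpos_iff]
  positivity

lemma abs_heatKernel_le {s : ℝ} (hs : 0 < s) (v : V) :
    |heatKernel s v| ≤ (4 * π * s) ^ (-(finrank ℝ V : ℝ) / 2) :=
  (abs_of_nonneg (heatKernel_nonneg hs v)).trans_le (heatKernel_le hs v)

lemma heatKernel_sub_comm (s : ℝ) (x y : V) : heatKernel s (x - y) = heatKernel s (y - x) := by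
  rw [heatKernel, heatKernel, norm_sub_rev]

lemma continuous_heatKernel (s : ℝ) : Continuous (heatKernel (V := V) s) := by
  unfold heatKernel; fun_prop

lemma continuous_heatKernel_sub (s : ℝ) (x : V) : Continuous fun z ↦ heatKernel s (x - z) :=
  (continuous_heatKernel s).comp (continuous_const.sub continuous_id)

lemma heatKernel_sq {t : ℝ} (ht : 0 < t) (v : V) :
    heatKernel (t ^ 2) v =
      t ^ (-(finrank ℝ V : ℝ)) *
        ((4 * π) ^ (-(finrank ℝ V : ℝ) / 2) * exp (-‖t⁻¹ • v‖ ^ 2 / 4)) := by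
  have hpow : (4 * π * t ^ 2) ^ (-(finrank ℝ V : ℝ) / 2) =
      (4 * π) ^ (-(finrank ℝ V : ℝ) / 2) * t ^ (-(finrank ℝ V : ℝ)) := by
    rw [mul_rpow (by positivity) (by positivity), ← rpow_natCast t 2, ← rpow_mul ht.le]
    congr 2
    push_cast
    ring
  have hexp : -‖t⁻¹ • v‖ ^ 2 / 4 = -‖v‖ ^ 2 / (4 * t ^ 2) := by
    rw [norm_smul, mul_pow, norm_inv, norm_of_nonneg ht.le]
    field_simp
  rw [heatKernel, hpow, hexp]
  ring

lemma exists_lipschitzWith_exp_neg_sq_div {s : ℝ} (hs : 0 < s) :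
    ∃ L, LipschitzWith L fun r : ℝ ↦ exp (-r ^ 2 / (4 * s)) := by
  have hderiv (r : ℝ) : HasDerivAt (fun r : ℝ ↦ exp (-r ^ 2 / (4 * s)))
      (exp (-r ^ 2 / (4 * s)) * (-(2 * r) / (4 * s))) r := by
    simpa using (((hasDerivAt_id r).pow 2).neg.div_const (4 * s)).exp
  refine ⟨((2 * s)⁻¹ * (1 + s)).toNNReal, lipschitzWith_of_nnnorm_deriv_le
    (fun r ↦ (hderiv r).differentiableAt) fun r ↦ ?_⟩
  have hexp : |r| * exp (-r ^ 2 / (4 * s)) ≤ 1 + s := by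
    rw [neg_div, exp_neg, ← div_eq_mul_inv, div_le_iff₀ (exp_pos _)]
    have hle := add_one_le_exp (r ^ 2 / (4 * s))
    have hr : |r| ≤ (1 + s) * (r ^ 2 / (4 * s) + 1) := by
      have : r ^ 2 / (4 * s) * s = |r| ^ 2 / 4 := by rw [sq_abs]; field_simp
      nlinarith [sq_nonneg (|r| - 2), show 0 ≤ r ^ 2 / (4 * s) by positivity]
    exact hr.trans (by gcongr)
  rw [← NNReal.coe_le_coe, coe_nnnorm, (hderiv r).deriv, Real.coe_toNNReal _ (by positivity),
    norm_eq_abs, abs_mul, abs_exp, abs_div, abs_neg, abs_mul, abs_two,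
    abs_of_pos (by positivity : 0 < 4 * s)]
  calc exp (-r ^ 2 / (4 * s)) * (2 * |r| / (4 * s))
      = (2 * s)⁻¹ * (|r| * exp (-r ^ 2 / (4 * s))) := by field_simp; norm_num
    _ ≤ (2 * s)⁻¹ * (1 + s) := by gcongr

lemma exists_lipschitzWith_heatKernel {s : ℝ} (hs : 0 < s) :
    ∃ L, LipschitzWith L (heatKernel (V := V) s) := by
  obtain ⟨L, hL⟩ := exists_lipschitzWith_exp_neg_sq_div hs
  exact ⟨_, (lipschitzWith_smul ((4 * π * s) ^ (-(finrank ℝ V : ℝ) / 2))).comp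
    (hL.comp lipschitzWith_one_norm)⟩

lemma one_add_pow_mul_exp_neg_sq_le (p : ℕ) {τ : ℝ} (hτ : 0 ≤ τ) :
    (1 + τ) ^ p * exp (-τ ^ 2 / 4) ≤ p.factorial * exp 3 * exp (-τ ^ 2 / 8) := by
  have hpow : (1 + τ) ^ p ≤ p.factorial * exp (1 + τ) := by
    have := pow_div_factorial_le_exp (1 + τ) (by positivity) p
    rwa [div_le_iff₀' (by positivity)] at this
  calc (1 + τ) ^ p * exp (-τ ^ 2 / 4)
      ≤ p.factorial * exp (1 + τ) * exp (-τ ^ 2 / 4) := by gcongr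
    _ = p.factorial * exp (1 + τ + -τ ^ 2 / 4) := by rw [mul_assoc, ← exp_add]
    _ ≤ p.factorial * exp (3 + -τ ^ 2 / 8) := by
      gcongr _ * exp ?_
      linarith [sq_nonneg (τ - 4)]
    _ = p.factorial * exp 3 * exp (-τ ^ 2 / 8) := by rw [exp_add, mul_assoc]

variable (V) in
lemma exists_one_add_pow_mul_heatKernel_le (p : ℕ) :
    ∃ C > 0, ∀ {s ρ : ℝ}, 0 < s → 0 < ρ → s ≤ 4 * ρ ^ 2 → ∀ v : V,
      (1 + ‖v‖ / ρ) ^ p * heatKernel s v ≤ C * heatKernel (2 * s) v := by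
  refine ⟨2 ^ p * (p.factorial * exp 3) * 2 ^ ((finrank ℝ V : ℝ) / 2), by positivity,
    fun {s ρ} hs hρ hsρ v ↦ ?_⟩
  set τ := ‖v‖ / √s with hτ
  have hv : ‖v‖ ^ 2 = τ ^ 2 * s := by rw [hτ, div_pow, sq_sqrt hs.le]; field_simp
  have hρτ : 1 + ‖v‖ / ρ ≤ 2 * (1 + τ) := by
    have hsqrt : √s ≤ 2 * ρ := sqrt_le_left (by positivity) |>.2 (by linarith)
    have : ‖v‖ / ρ ≤ 2 * τ := by
      rw [hτ, mul_div_assoc', div_le_div_iff₀ hρ (by positivity)]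
      nlinarith [norm_nonneg v]
    linarith
  have hpow : (4 * π * s) ^ (-(finrank ℝ V : ℝ) / 2) =
      2 ^ ((finrank ℝ V : ℝ) / 2) * (4 * π * (2 * s)) ^ (-(finrank ℝ V : ℝ) / 2) := by
    rw [mul_left_comm, mul_rpow zero_le_two (by positivity), ← mul_assoc, neg_div,
      ← rpow_add two_pos, add_neg_cancel, Real.rpow_zero, one_mul]
  have hexp : -‖v‖ ^ 2 / (4 * s) = -τ ^ 2 / 4 ∧ -‖v‖ ^ 2 / (4 * (2 * s)) = -τ ^ 2 / 8 := by
    rw [hv]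
    constructor
    · field_simp
    · field_simp
      ring
  simp only [heatKernel]
  rw [hexp.1, hexp.2, hpow]
  set A := (4 * π * (2 * s)) ^ (-(finrank ℝ V : ℝ) / 2)
  set c := (2 : ℝ) ^ ((finrank ℝ V : ℝ) / 2)
  calc (1 + ‖v‖ / ρ) ^ p * (c * A * exp (-τ ^ 2 / 4))
      ≤ (2 * (1 + τ)) ^ p * (c * A * exp (-τ ^ 2 / 4)) := by gcongr
    _ = 2 ^ p * c * A * ((1 + τ) ^ p * exp (-τ ^ 2 / 4)) := by rw [mul_pow]; ring
    _ ≤ 2 ^ p * c * A * (p.factorial * exp 3 * exp (-τ ^ 2 / 8)) := by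
      gcongr 2 ^ p * c * A * ?_
      exact one_add_pow_mul_exp_neg_sq_le p (by positivity)
    _ = _ := by ring

lemma norm_sq_smul_sub {p q : ℝ} (hpq : p + q = 1) (v w : V) :
    q * ‖p • w - v‖ ^ 2 + p * ‖q • w + v‖ ^ 2 = p * q * ‖w‖ ^ 2 + ‖v‖ ^ 2 := by
  obtain rfl := eq_sub_of_add_eq hpq
  rw [norm_sub_sq_real, norm_add_sq_real, norm_smul, norm_smul, real_inner_smul_left,
    real_inner_smul_left, mul_pow, mul_pow, norm_eq_abs, norm_eq_abs, sq_abs, sq_abs]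
  ring

lemma heatKernel_mul_heatKernel {a b : ℝ} (ha : 0 < a) (hb : 0 < b) (x y z : V) :
    heatKernel a (x - z) * heatKernel b (z - y) = heatKernel (a + b) (x - y) *
      heatKernel (a * b / (a + b)) (z - ((b / (a + b)) • x + (a / (a + b)) • y)) := by
  have hab : b / (a + b) + a / (a + b) = 1 := by field_simp; ring
  set v := z - ((b / (a + b)) • x + (a / (a + b)) • y) with hv
  have hxz : x - z = (a / (a + b)) • (x - y) - v := by
    rw [eq_sub_of_add_eq' hab] at hv ⊢
    rw [hv]; module
  have hzy : z - y = (b / (a + b)) • (x - y) + v := by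
    rw [eq_sub_of_add_eq' hab] at hv
    rw [hv]; module
  have hconst : (4 * π * a) ^ (-(finrank ℝ V : ℝ) / 2) * (4 * π * b) ^ (-(finrank ℝ V : ℝ) / 2) =
      (4 * π * (a + b)) ^ (-(finrank ℝ V : ℝ) / 2) *
        (4 * π * (a * b / (a + b))) ^ (-(finrank ℝ V : ℝ) / 2) := by
    rw [← mul_rpow (by positivity) (by positivity), ← mul_rpow (by positivity) (by positivity)]
    congr 1
    field_simp
  have hexp : -‖x - z‖ ^ 2 / (4 * a) + -‖z - y‖ ^ 2 / (4 * b) =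
      -‖x - y‖ ^ 2 / (4 * (a + b)) + -‖v‖ ^ 2 / (4 * (a * b / (a + b))) := by
    have := norm_sq_smul_sub (add_comm _ _ |>.trans hab) v (x - y)
    rw [← hxz, ← hzy] at this
    field_simp at this ⊢
    linarith
  simp only [heatKernel]
  rw [mul_mul_mul_comm, hconst, ← exp_add, hexp, exp_add, mul_mul_mul_comm]

variable [FiniteDimensional ℝ V] [MeasurableSpace V] [BorelSpace V]

lemma integral_heatKernel {s : ℝ} (hs : 0 < s) : ∫ v : V, heatKernel s v = 1 := by
  have hexp (v : V) : exp (-‖v‖ ^ 2 / (4 * s)) = exp (-(1 / (4 * s)) * ‖v‖ ^ 2) := by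
    congr 1; ring
  have hπ : π / (1 / (4 * s)) = 4 * π * s := by field_simp
  simp only [heatKernel, hexp]
  rw [integral_const_mul, GaussianFourier.integral_rexp_neg_mul_sq_norm (by positivity), hπ,
    ← rpow_add (by positivity), neg_div, neg_add_cancel, Real.rpow_zero]

lemma integrable_heatKernel {s : ℝ} (hs : 0 < s) : Integrable (heatKernel (V := V) s) :=
  .of_integral_ne_zero (by rw [integral_heatKernel hs]; exact one_ne_zero)

lemma integral_heatKernel_sub {s : ℝ} (hs : 0 < s) (x : V) : ∫ y, heatKernel s (x - y) = 1 := by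
  rw [integral_sub_left_eq_self, integral_heatKernel hs]

lemma integral_heatKernel_mul_heatKernel {a b : ℝ} (ha : 0 < a) (hb : 0 < b) (x y : V) :
    ∫ z, heatKernel a (x - z) * heatKernel b (z - y) = heatKernel (a + b) (x - y) := by
  simp only [heatKernel_mul_heatKernel ha hb]
  rw [integral_const_mul, integral_sub_right_eq_self, integral_heatKernel (by positivity), mul_one]

end HeatKernel

section Heat

open Module

variable {V : Type*} [NormedAddCommGroup V] [InnerProductSpace ℝ V] [FiniteDimensional ℝ V]
  [MeasurableSpace V] [BorelSpace V] {s : ℝ} {f p : V → ℝ}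

/-- The heat semigroup `e^{sΔ}`, as convolution with `heatKernel s`. -/
def heat (s : ℝ) (f : V → ℝ) (x : V) : ℝ := ∫ z, heatKernel s (x - z) * f z

lemma integrable_heatKernel_sub_mul (hs : 0 < s) (hf : Integrable f) (x : V) :
    Integrable fun z ↦ heatKernel s (x - z) * f z :=
  hf.bdd_mul (continuous_heatKernel_sub s x).aestronglyMeasurable
    (.of_forall fun z ↦ abs_heatKernel_le hs (x - z))

lemma integrable_heatKernel_sub_mul_of_bdd (hs : 0 < s) {B : ℝ} (hp : AEStronglyMeasurable p)
    (hpB : ∀ x, |p x| ≤ B) (x : V) : Integrable fun z ↦ heatKernel s (x - z) * p z :=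
  ((integrable_heatKernel hs).comp_sub_left x).mul_bdd hp (.of_forall hpB)

lemma abs_heat_le (hs : 0 < s) (hf : Integrable f) (x : V) :
    |heat s f x| ≤ (4 * π * s) ^ (-(finrank ℝ V : ℝ) / 2) * ∫ z, |f z| := by
  rw [← integral_const_mul _ fun z : V ↦ |f z|]
  refine (norm_integral_le_integral_norm _).trans <|
    integral_mono (integrable_heatKernel_sub_mul hs hf x).norm (hf.abs.const_mul _) fun z ↦ ?_
  simp only [norm_mul]
  gcongr
  exacts [abs_heatKernel_le hs _, le_rfl]

lemma heat_const (hs : 0 < s) (c : ℝ) (x : V) : heat s (fun _ ↦ c) x = c := by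
  rw [heat, integral_mul_const, integral_heatKernel_sub hs, one_mul]

lemma heat_nonneg (hs : 0 < s) (hf : ∀ x, 0 ≤ f x) (x : V) : 0 ≤ heat s f x :=
  integral_nonneg fun z ↦ mul_nonneg (heatKernel_nonneg hs _) (hf z)

lemma continuous_heat (hs : 0 < s) (hf : Integrable f) : Continuous (heat s f) := by
  have hbdd : BddAbove (Set.range fun v : V ↦ ‖heatKernel s v‖) :=
    ⟨_, Set.forall_mem_range.2 (abs_heatKernel_le hs)⟩
  have hconv : heat s f = convolution f (heatKernel s) (ContinuousLinearMap.mul ℝ ℝ) := by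
    funext x
    simp only [heat, convolution_def, ContinuousLinearMap.mul_apply', mul_comm]
  rw [hconv]
  exact hbdd.continuous_convolution_right_of_integrable _ hf (continuous_heatKernel s)

lemma integrable_heatKernel_sub_mul_prod (hs : 0 < s) (hf : Integrable f) :
    Integrable (fun q : V × V ↦ heatKernel s (q.1 - q.2) * f q.2) (volume.prod volume) := by
  simpa only [ContinuousLinearMap.mul_apply', mul_comm] using
    hf.convolution_integrand (ContinuousLinearMap.mul ℝ ℝ) (integrable_heatKernel hs)

lemma integrable_heat (hs : 0 < s) (hf : Integrable f) : Integrable (heat s f) :=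
  (integrable_heatKernel_sub_mul_prod hs hf).integral_prod_left

lemma integral_mul_heat (hs : 0 < s) (hf : Integrable f) {B : ℝ} (hp : AEStronglyMeasurable p)
    (hpB : ∀ x, |p x| ≤ B) : ∫ x, p x * heat s f x = ∫ x, heat s p x * f x := by
  have hInt : Integrable (fun q : V × V ↦ p q.1 * (heatKernel s (q.1 - q.2) * f q.2))
      (volume.prod volume) :=
    (integrable_heatKernel_sub_mul_prod hs hf).bdd_mul hp.comp_fst (.of_forall fun q ↦ hpB q.1)
  calc ∫ x, p x * heat s f x = ∫ x, ∫ z, p x * (heatKernel s (x - z) * f z) := by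
        simp only [heat, integral_const_mul]
    _ = ∫ z, ∫ x, p x * (heatKernel s (x - z) * f z) := integral_integral_swap hInt
    _ = ∫ z, heat s p z * f z := by
        congr with z
        rw [heat, ← integral_mul_const]
        congr with x
        rw [heatKernel_sub_comm]
        ring

lemma integral_heat (hs : 0 < s) (hf : Integrable f) : ∫ x, heat s f x = ∫ x, f x := by
  simpa [heat_const hs] using
    integral_mul_heat hs hf (aestronglyMeasurable_const (b := (1 : ℝ))) (fun _ ↦ abs_one.le)

lemma abs_heat_le_heat_abs (hs : 0 < s) (f : V → ℝ) (x : V) :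
    |heat s f x| ≤ heat s (fun z ↦ |f z|) x := by
  refine (abs_integral_le_integral_abs ..).trans_eq ?_
  simp only [abs_mul, abs_of_nonneg (heatKernel_nonneg hs _), heat]

lemma integral_abs_heat_le (hs : 0 < s) (hf : Integrable f) : ∫ x, |heat s f x| ≤ ∫ x, |f x| :=
  (integral_mono (integrable_heat hs hf).abs (integrable_heat hs hf.abs)
    (abs_heat_le_heat_abs hs f)).trans_eq (integral_heat hs hf.abs)

lemma aestronglyMeasurable_heat (s : ℝ) (hp : AEStronglyMeasurable p) :
    AEStronglyMeasurable (heat s p) :=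
  (((continuous_heatKernel s).comp (continuous_fst.sub continuous_snd)).aestronglyMeasurable.mul
    hp.comp_snd).integral_prod_right'

lemma abs_heat_le_of_bdd (hs : 0 < s) {B : ℝ} (hpB : ∀ x, |p x| ≤ B) (x : V) :
    |heat s p x| ≤ B := by
  have hB := ((integrable_heatKernel (V := V) hs).comp_sub_left x).mul_const B
  calc |heat s p x| ≤ heat s (fun z ↦ |p z|) x := abs_heat_le_heat_abs hs p x
    _ ≤ heat s (fun _ ↦ B) x := integral_mono_of_nonneg
        (.of_forall fun z ↦ mul_nonneg (heatKernel_nonneg hs _) (abs_nonneg _)) hB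
        (.of_forall fun z ↦ mul_le_mul_of_nonneg_left (hpB z) (heatKernel_nonneg hs _))
    _ = B := heat_const hs B x

lemma heat_heat {a b : ℝ} (ha : 0 < a) (hb : 0 < b) (hf : Integrable f) (x : V) :
    heat a (heat b f) x = heat (a + b) f x := by
  rw [heat, integral_mul_heat hb hf (continuous_heatKernel_sub a x).aestronglyMeasurable
    fun z ↦ abs_heatKernel_le ha (x - z)]
  refine integral_congr_ae (.of_forall fun z ↦ ?_)
  simp only [heat]
  rw [← integral_heatKernel_mul_heatKernel ha hb]
  congr with y
  rw [heatKernel_sub_comm b, mul_comm]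

variable (V) in
lemma exists_integral_heatKernel_mul_norm_le :
    ∃ C > 0, ∀ s > 0, Integrable (fun v : V ↦ heatKernel s v * ‖v‖) ∧
      ∫ v : V, heatKernel s v * ‖v‖ ≤ C * √s := by
  obtain ⟨C, hC, h⟩ := exists_one_add_pow_mul_heatKernel_le V 1
  refine ⟨C, hC, fun s hs ↦ ?_⟩
  have hs' := sqrt_pos.2 hs
  have hle (v : V) : heatKernel s v * ‖v‖ ≤ C * √s * heatKernel (2 * s) v := by
    have hK := heatKernel_nonneg hs v
    have := h hs hs' (by rw [sq_sqrt hs.le]; linarith) v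
    rw [pow_one] at this
    calc heatKernel s v * ‖v‖ = √s * (‖v‖ / √s * heatKernel s v) := by field_simp
      _ ≤ √s * ((1 + ‖v‖ / √s) * heatKernel s v) := by gcongr; linarith
      _ ≤ √s * (C * heatKernel (2 * s) v) := by gcongr
      _ = C * √s * heatKernel (2 * s) v := by ring
  have hInt : Integrable fun v : V ↦ C * √s * heatKernel (2 * s) v :=
    (integrable_heatKernel (by positivity)).const_mul _
  have hInt' : Integrable fun v : V ↦ heatKernel s v * ‖v‖ :=
    hInt.mono' ((continuous_heatKernel s).mul continuous_norm).aestronglyMeasurable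
      (.of_forall fun v ↦ by
        rw [norm_of_nonneg (mul_nonneg (heatKernel_nonneg hs v) (norm_nonneg v))]
        exact hle v)
  refine ⟨hInt', (integral_mono hInt' hInt hle).trans_eq ?_⟩
  rw [integral_const_mul, integral_heatKernel (by positivity), mul_one]

variable (V) in
lemma exists_abs_heat_mul_sub_le :
    ∃ C > 0, ∀ s > 0, ∀ {L : ℝ≥0} {ψ a : V → ℝ}, LipschitzWith L ψ → AEStronglyMeasurable a →
      (∀ x, |a x| ≤ 1) → ∀ x, |heat s (fun z ↦ ψ z * a z) x - ψ x * heat s a x| ≤ C * L * √s := by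
  obtain ⟨C, hC, h⟩ := exists_integral_heatKernel_mul_norm_le V
  refine ⟨C, hC, fun s hs L ψ a hψ ha ha₁ x ↦ ?_⟩
  have hbound : Integrable fun z ↦ L * (heatKernel s (x - z) * ‖x - z‖) :=
    ((h s hs).1.comp_sub_left x).const_mul _
  have hle (z : V) : ‖heatKernel s (x - z) * ((ψ z - ψ x) * a z)‖ ≤
      L * (heatKernel s (x - z) * ‖x - z‖) := by
    have hψ' : |ψ z - ψ x| ≤ L * ‖x - z‖ := by
      rw [← Real.dist_eq, ← dist_eq_norm, dist_comm x]
      exact hψ.dist_le_mul z x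
    have hK := heatKernel_nonneg hs (x - z)
    calc _ = heatKernel s (x - z) * (|ψ z - ψ x| * |a z|) := by
          rw [norm_eq_abs, abs_mul, abs_mul, abs_of_nonneg hK]
      _ ≤ heatKernel s (x - z) * (L * ‖x - z‖ * 1) := by gcongr; exact ha₁ z
      _ = _ := by ring
  have hInt : Integrable fun z ↦ heatKernel s (x - z) * ((ψ z - ψ x) * a z) :=
    hbound.mono' ((continuous_heatKernel_sub s x).aestronglyMeasurable.mul
        ((hψ.continuous.sub continuous_const).aestronglyMeasurable.mul ha)) (.of_forall hle)
  have hsplit : heat s (fun z ↦ ψ z * a z) x - ψ x * heat s a x =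
      ∫ z, heatKernel s (x - z) * ((ψ z - ψ x) * a z) := by
    have hinta := (integrable_heatKernel_sub_mul_of_bdd hs ha ha₁ x).const_mul (ψ x)
    rw [sub_eq_iff_eq_add, heat, heat, ← integral_const_mul, ← integral_add hInt hinta]
    congr with z
    ring
  rw [hsplit]
  calc _ ≤ ∫ z, L * (heatKernel s (x - z) * ‖x - z‖) :=
        norm_integral_le_of_norm_le hbound (.of_forall hle)
    _ = L * ∫ v : V, heatKernel s v * ‖v‖ := by
        rw [integral_const_mul, integral_sub_left_eq_self fun v ↦ heatKernel s v * ‖v‖]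
    _ ≤ L * (C * √s) := by gcongr; exact (h s hs).2
    _ = C * L * √s := by ring

end Heat

section Translation

variable {V : Type*} [NormedAddCommGroup V] [MeasurableSpace V] [BorelSpace V]
  [SecondCountableTopology V] [LocallyCompactSpace V] {μ : Measure V} [μ.IsAddHaarMeasure]
  {f : V → ℝ}

lemma tendsto_integral_abs_comp_sub_sub (hf : Integrable f μ) :
    Tendsto (fun v ↦ ∫ x, |f (x - v) - f x| ∂μ) (𝓝 0) (𝓝 0) := by
  let τ : C(V, C(V, V)) := (ContinuousMap.mk fun q : V × V ↦ q.2 - q.1).curry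
  have hτ (v : V) : MeasurePreserving (τ v) μ μ := measurePreserving_sub_right μ v
  have hcont : Continuous fun v ↦ Lp.compMeasurePreserving (τ v) (hτ v) (hf.toL1 f) :=
    continuous_const.compMeasurePreservingLp τ.continuous hτ one_ne_top
  have hnorm (v : V) : ∫ x, |f (x - v) - f x| ∂μ =
      ‖Lp.compMeasurePreserving (τ v) (hτ v) (hf.toL1 f) - hf.toL1 f‖ := by
    rw [L1.norm_eq_integral_norm]
    refine integral_congr_ae ?_
    filter_upwards [Lp.coeFn_sub (Lp.compMeasurePreserving (τ v) (hτ v) (hf.toL1 f)) (hf.toL1 f),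
      Lp.coeFn_compMeasurePreserving (hf.toL1 f) (hτ v), hf.coeFn_toL1,
      (hτ v).quasiMeasurePreserving.ae hf.coeFn_toL1] with x hsub hcomp hx hxv
    rw [hsub, Pi.sub_apply, hcomp, Function.comp_apply, hxv, hx]
    rfl
  have h0 : ∫ x, |f (x - 0) - f x| ∂μ = 0 := by simp
  simp only [hnorm] at h0 ⊢
  exact h0 ▸ (hcont.sub continuous_const).norm.tendsto 0

lemma exists_integral_abs_comp_sub_sub_le (hf : Integrable f μ) {ε : ℝ} (hε : 0 < ε) :
    ∃ C ≥ 0, ∀ v, ∫ x, |f (x - v) - f x| ∂μ ≤ ε + C * ‖v‖ := by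
  obtain ⟨δ, hδ, hsmall⟩ := Metric.eventually_nhds_iff.1
    ((tendsto_integral_abs_comp_sub_sub hf).eventually_le_const hε)
  refine ⟨2 * (∫ x, |f x| ∂μ) / δ, by positivity, fun v ↦ ?_⟩
  rcases lt_or_ge ‖v‖ δ with hv | hv
  · exact (hsmall (by rwa [dist_zero_right])).trans (le_add_of_nonneg_right (by positivity))
  · have htriangle : ∫ x, |f (x - v) - f x| ∂μ ≤ ∫ x, (|f (x - v)| + |f x|) ∂μ :=
      integral_mono ((hf.comp_sub_right v).sub hf).abs ((hf.comp_sub_right v).abs.add hf.abs)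
        fun x ↦ abs_sub _ _
    calc ∫ x, |f (x - v) - f x| ∂μ ≤ 2 * (∫ x, |f x| ∂μ) := by
          rw [integral_add (hf.comp_sub_right v).abs hf.abs,
            integral_sub_right_eq_self (fun x ↦ |f x|)] at htriangle
          linarith
      _ ≤ 2 * (∫ x, |f x| ∂μ) / δ * ‖v‖ := by
          rw [div_mul_eq_mul_div, le_div_iff₀ hδ]
          gcongr
      _ ≤ ε + _ := le_add_of_nonneg_left hε.le

end Translation

section HeatApproximation

variable {V : Type*} [NormedAddCommGroup V] [InnerProductSpace ℝ V] [FiniteDimensional ℝ V]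
  [MeasurableSpace V] [BorelSpace V] {s : ℝ} {f : V → ℝ}

lemma integral_abs_heat_sub_le (hs : 0 < s) (hf : Integrable f) :
    ∫ x, |heat s f x - f x| ≤ ∫ v, heatKernel s v * ∫ x, |f (x - v) - f x| := by
  have hprod : Integrable (fun q : V × V ↦ heatKernel s q.2 * (f (q.1 - q.2) - f q.1))
      (volume.prod volume) := by
    have h₁ : Integrable (fun q : V × V ↦ heatKernel s q.2 * f (q.1 - q.2))
        (volume.prod volume) :=
      (integrable_heatKernel hs).convolution_integrand (ContinuousLinearMap.mul ℝ ℝ) hf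
    have h₂ : Integrable (fun q : V × V ↦ heatKernel s q.2 * f q.1) (volume.prod volume) := by
      simpa only [mul_comm] using hf.mul_prod (integrable_heatKernel hs)
    simp only [mul_sub]
    exact h₁.sub h₂
  have hpoint (x : V) : |heat s f x - f x| ≤ ∫ v, |heatKernel s v * (f (x - v) - f x)| := by
    have hheat : heat s f x = ∫ v, heatKernel s v * f (x - v) := by
      rw [heat, ← integral_sub_left_eq_self (fun v ↦ heatKernel s v * f (x - v)) volume x]
      simp only [_root_.sub_sub_cancel]
    have hInt : Integrable fun v ↦ heatKernel s v * f (x - v) := by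
      simpa only [_root_.sub_sub_cancel] using
        (integrable_heatKernel_sub_mul hs hf x).comp_sub_left x
    have hsub : heat s f x - f x = ∫ v, heatKernel s v * (f (x - v) - f x) := by
      simp only [mul_sub]
      rw [integral_sub hInt ((integrable_heatKernel hs).mul_const _), integral_mul_const,
        integral_heatKernel hs, one_mul, hheat]
    rw [hsub]
    exact abs_integral_le_integral_abs
  calc ∫ x, |heat s f x - f x| ≤ ∫ x, ∫ v, |heatKernel s v * (f (x - v) - f x)| :=
        integral_mono ((integrable_heat hs hf).sub hf).abs hprod.abs.integral_prod_left hpoint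
    _ = ∫ v, ∫ x, |heatKernel s v * (f (x - v) - f x)| := integral_integral_swap hprod.abs
    _ = _ := by simp only [abs_mul, abs_of_nonneg (heatKernel_nonneg hs _), integral_const_mul]

lemma tendsto_integral_abs_heat_sub (hf : Integrable f) :
    Tendsto (fun s ↦ ∫ x, |heat s f x - f x|) (𝓝[>] 0) (𝓝 0) := by
  obtain ⟨C, -, hC⟩ := exists_integral_heatKernel_mul_norm_le V
  have hle : ∀ ε > 0, ∀ᶠ s in 𝓝[>] (0 : ℝ), ∫ x, |heat s f x - f x| < ε := by
    intro ε hε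
    obtain ⟨A, hA, hmod⟩ := exists_integral_abs_comp_sub_sub_le hf (half_pos hε)
    have hbound {s : ℝ} (hs : 0 < s) : ∫ x, |heat s f x - f x| ≤ ε / 2 + A * (C * √s) := by
      have hK := (integrable_heatKernel (V := V) hs).const_mul (ε / 2)
      have hKn := (hC s hs).1.const_mul A
      calc ∫ x, |heat s f x - f x| ≤ ∫ v, heatKernel s v * ∫ x, |f (x - v) - f x| :=
            integral_abs_heat_sub_le hs hf
        _ ≤ ∫ v : V, (ε / 2 * heatKernel s v + A * (heatKernel s v * ‖v‖)) := by
            refine integral_mono_of_nonneg (.of_forall fun v ↦ mul_nonneg (heatKernel_nonneg hs v)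
              (integral_nonneg fun x ↦ abs_nonneg _)) (hK.add hKn) (.of_forall fun v ↦ ?_)
            calc _ ≤ heatKernel s v * (ε / 2 + A * ‖v‖) := by
                  exact mul_le_mul_of_nonneg_left (hmod v) (heatKernel_nonneg hs v)
              _ = _ := by ring
        _ ≤ ε / 2 + A * (C * √s) := by
            rw [integral_add hK hKn, integral_const_mul, integral_const_mul,
              integral_heatKernel hs, mul_one]
            gcongr
            exact (hC s hs).2
    have hlim : Tendsto (fun s ↦ ε / 2 + A * (C * √s)) (𝓝[>] 0) (𝓝 (ε / 2)) := by
      have : Continuous fun s ↦ ε / 2 + A * (C * √s) := by fun_prop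
      simpa using (this.tendsto 0).mono_left nhdsWithin_le_nhds
    filter_upwards [hlim.eventually_lt_const (half_lt_self hε), self_mem_nhdsWithin] with s hlt hs
    exact (hbound hs).trans_lt hlt
  refine tendsto_order.2 ⟨fun a ha ↦ .of_forall fun s ↦ ha.trans_le
    (integral_nonneg fun x ↦ abs_nonneg _), hle⟩

end HeatApproximation

lemma tendsto_div_two_pow_sq_nhdsGT_zero {r : ℝ} (hr : 0 < r) :
    Tendsto (fun k : ℕ ↦ (r / 2 ^ k) ^ 2) atTop (𝓝[>] 0) := by
  refine tendsto_nhdsWithin_iff.2 ⟨?_, .of_forall fun k ↦ Set.mem_Ioi.2 (by positivity)⟩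
  have := (tendsto_const_nhds (x := r)).div_atTop
    (tendsto_pow_atTop_atTop_of_one_lt (one_lt_two (α := ℝ)))
  simpa using this.pow 2

section HeatMaximal

variable {V : Type*} [NormedAddCommGroup V] [InnerProductSpace ℝ V] [FiniteDimensional ℝ V]
  [MeasurableSpace V] [BorelSpace V] {R t : ℝ} {f : V → ℝ}

/-- The truncated heat maximal function `sup_{0 < t < R} |e^{t²Δ} f|`. -/
def heatMaximal (R : ℝ) (f : V → ℝ) (x : V) : ℝ≥0∞ := ⨆ t ∈ Set.Ioo 0 R, ‖heat (t ^ 2) f x‖ₑ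

lemma enorm_heat_le_heatMaximal (ht : 0 < t) (htR : t < R) (f : V → ℝ) (x : V) :
    ‖heat (t ^ 2) f x‖ₑ ≤ heatMaximal R f x :=
  le_iSup₂ (f := fun t (_ : t ∈ Set.Ioo 0 R) ↦ ‖heat (t ^ 2) f x‖ₑ) t ⟨ht, htR⟩

lemma measurable_heatMaximal (hf : Integrable f) (R : ℝ) : Measurable (heatMaximal R f) :=
  (lowerSemicontinuous_biSup fun _ ht ↦
    (continuous_heat (pow_pos ht.1 2) hf).enorm.lowerSemicontinuous).measurable

lemma exists_seq_ae_tendsto_heat (hf : Integrable f) {s : ℕ → ℝ}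
    (hs : Tendsto s atTop (𝓝[>] 0)) :
    ∃ ns : ℕ → ℕ, ∀ᵐ x, Tendsto (fun i ↦ heat (s (ns i)) f x) atTop (𝓝 (f x)) := by
  obtain ⟨j₀, hj₀⟩ := eventually_atTop.1 (hs.eventually self_mem_nhdsWithin)
  have hInt (j : ℕ) : Integrable (heat (s (j + j₀)) f) := integrable_heat (hj₀ _ (by omega)) hf
  have hL1 : Tendsto (fun j ↦ eLpNorm (heat (s (j + j₀)) f - f) 1 volume) atTop (𝓝 0) := by
    have := ENNReal.tendsto_ofReal <|
      (tendsto_integral_abs_heat_sub hf).comp (hs.comp (tendsto_add_atTop_nat j₀))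
    rw [ENNReal.ofReal_zero] at this
    refine this.congr fun j ↦ ?_
    rw [eLpNorm_one_eq_lintegral_enorm, ← ofReal_integral_norm_eq_lintegral_enorm ((hInt j).sub hf)]
    rfl
  obtain ⟨ns, -, hns⟩ := (tendstoInMeasure_of_tendsto_eLpNorm one_ne_zero
    (fun j ↦ (hInt j).aestronglyMeasurable) hf.aestronglyMeasurable hL1).exists_seq_tendsto_ae
  exact ⟨fun i ↦ ns i + j₀, hns⟩

lemma ae_enorm_le_heatMaximal (hR : 0 < R) (hf : Integrable f) :
    ∀ᵐ x, ‖f x‖ₑ ≤ heatMaximal R f x := by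
  obtain ⟨ns, hns⟩ := exists_seq_ae_tendsto_heat hf
    (tendsto_div_two_pow_sq_nhdsGT_zero (half_pos hR))
  filter_upwards [hns] with x hx
  refine le_of_tendsto hx.enorm (.of_forall fun i ↦
    enorm_heat_le_heatMaximal (by positivity) ?_ f x)
  calc R / 2 / 2 ^ ns i ≤ R / 2 := div_le_self (by positivity) (one_le_pow₀ one_le_two)
    _ < R := half_lt_self hR

lemma ofReal_integral_abs_le_lintegral_heatMaximal (hR : 0 < R) (hf : Integrable f) :
    ENNReal.ofReal (∫ x, |f x|) ≤ ∫⁻ x, heatMaximal R f x := by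
  simp only [← norm_eq_abs]
  rw [ofReal_integral_norm_eq_lintegral_enorm hf]
  exact lintegral_mono_ae (ae_enorm_le_heatMaximal hR hf)

end HeatMaximal

section TangentialBound

open Module

variable {V : Type*} [NormedAddCommGroup V]

lemma one_add_norm_sub_div_le {ρ : ℝ} (hρ : 0 < ρ) (x y z : V) :
    1 + ‖x - z‖ / ρ ≤ (1 + ‖x - y‖ / ρ) * (1 + ‖y - z‖ / ρ) := by
  have htri : ‖x - z‖ / ρ ≤ ‖x - y‖ / ρ + ‖y - z‖ / ρ := by
    rw [← add_div]
    gcongr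
    exact norm_sub_le_norm_sub_add_norm_sub x y z
  have : 0 ≤ ‖x - y‖ / ρ * (‖y - z‖ / ρ) := by positivity
  linarith

variable [InnerProductSpace ℝ V] [FiniteDimensional ℝ V] [MeasurableSpace V] [BorelSpace V]

lemma heatKernel_six_mul_sq_mul_volume_ball_le {ρ : ℝ} (hρ : 0 < ρ) (x v : V) :
    heatKernel (6 * ρ ^ 2) v * volume.real (ball x ρ) ≤ volume.real (ball (0 : V) 1) := by
  have hpow : (4 * π * (6 * ρ ^ 2)) ^ (-(finrank ℝ V : ℝ) / 2) ≤ (ρ ^ finrank ℝ V)⁻¹ := by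
    calc _ ≤ (ρ ^ 2) ^ (-(finrank ℝ V : ℝ) / 2) := by
          refine rpow_le_rpow_of_nonpos (by positivity) ?_
            (div_nonpos_of_nonpos_of_nonneg (by simp) zero_le_two)
          nlinarith [pi_gt_three, sq_nonneg ρ]
      _ = _ := by
          rw [← Real.rpow_natCast ρ 2, ← rpow_mul hρ.le, Nat.cast_two,
            mul_div_cancel₀ _ two_ne_zero, rpow_neg hρ.le, Real.rpow_natCast]
  have hball : volume.real (ball x ρ) = ρ ^ finrank ℝ V * volume.real (ball (0 : V) 1) := by
    rw [measureReal_def, Measure.addHaar_ball_of_pos _ _ hρ, toReal_mul,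
      toReal_ofReal (by positivity), measureReal_def]
  calc _ ≤ (ρ ^ finrank ℝ V)⁻¹ * volume.real (ball x ρ) := by
        gcongr
        exact (heatKernel_le (by positivity) v).trans hpow
    _ = _ := by rw [hball, inv_mul_cancel_left₀ (by positivity)]

variable (V) in
lemma exists_heatKernel_mul_one_add_pow_le (m : ℕ) :
    ∃ C > 0, ∀ {ρ : ℝ}, 0 < ρ → ∀ x z w : V,
      heatKernel (3 * ρ ^ 2) (z - w) * (1 + ‖x - w‖ / ρ) ^ m ≤
        C * (1 + ‖x - z‖ / ρ) ^ (2 * m) / volume.real (ball x ρ) *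
          ((1 + ‖x - w‖ / ρ) ^ m)⁻¹ := by
  obtain ⟨C, hC, h⟩ := exists_one_add_pow_mul_heatKernel_le V (2 * m)
  set c := volume.real (ball (0 : V) 1)
  refine ⟨C * c, _root_.mul_pos hC
    (toReal_pos (measure_ball_pos _ _ one_pos).ne' measure_ball_lt_top.ne), fun {ρ} hρ x z w ↦ ?_⟩
  have hK : (1 + ‖z - w‖ / ρ) ^ (2 * m) * heatKernel (3 * ρ ^ 2) (z - w) * volume.real (ball x ρ) ≤
      C * c := by
    have h₁ := h (s := 3 * ρ ^ 2) (by positivity) hρ (by linarith [sq_nonneg ρ]) (z - w)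
    rw [show 2 * (3 * ρ ^ 2) = 6 * ρ ^ 2 by ring] at h₁
    calc _ ≤ C * heatKernel (6 * ρ ^ 2) (z - w) * volume.real (ball x ρ) := by gcongr
      _ ≤ C * c := by
        rw [mul_assoc]
        gcongr
        exact heatKernel_six_mul_sq_mul_volume_ball_le hρ x _
  have hK₀ := heatKernel_nonneg (s := 3 * ρ ^ 2) (by positivity) (z - w)
  have hv : 0 < volume.real (ball x ρ) :=
    toReal_pos (measure_ball_pos _ _ hρ).ne' measure_ball_lt_top.ne
  rw [← div_eq_mul_inv, le_div_iff₀ (by positivity), le_div_iff₀ hv]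
  calc _ = (1 + ‖x - w‖ / ρ) ^ (2 * m) *
        (heatKernel (3 * ρ ^ 2) (z - w) * volume.real (ball x ρ)) := by ring
    _ ≤ ((1 + ‖x - z‖ / ρ) * (1 + ‖z - w‖ / ρ)) ^ (2 * m) *
        (heatKernel (3 * ρ ^ 2) (z - w) * volume.real (ball x ρ)) := by
        gcongr
        exact one_add_norm_sub_div_le hρ x z w
    _ = (1 + ‖x - z‖ / ρ) ^ (2 * m) * ((1 + ‖z - w‖ / ρ) ^ (2 * m) *
        heatKernel (3 * ρ ^ 2) (z - w) * volume.real (ball x ρ)) := by rw [mul_pow]; ring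
    _ ≤ (1 + ‖x - z‖ / ρ) ^ (2 * m) * (C * c) := by gcongr
    _ = _ := by ring

lemma enorm_le_ofReal_sqrt_mul {a b : ℝ} {c : ℝ≥0∞} (hab : |a| ≤ b) (hac : ‖a‖ₑ ≤ c ^ 2) :
    ‖a‖ₑ ≤ ENNReal.ofReal √b * c := by
  have ha : ‖a‖ₑ = ENNReal.ofReal √|a| ^ 2 := by
    rw [← ofReal_pow (sqrt_nonneg _), sq_sqrt (abs_nonneg a), enorm_eq_ofReal_abs]
  have hc : ENNReal.ofReal √|a| ≤ c := (ENNReal.pow_le_pow_left_iff two_ne_zero).1 (ha ▸ hac)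
  rw [ha, sq]
  gcongr

variable (V) in
lemma exists_enorm_heat_le_mul_lintegral (m : ℕ) :
    ∃ C > 0, ∀ {ρ Θ : ℝ} {u : V → ℝ} {g : V → ℝ≥0∞} {x : V}, 0 < ρ →
      (∀ w, ‖u w‖ₑ ≤ g w ^ 2) → (∀ w, |u w| ≤ Θ * (1 + ‖x - w‖ / ρ) ^ (2 * m)) → ∀ z,
      ‖heat (3 * ρ ^ 2) u z‖ₑ ≤
        ENNReal.ofReal (C * √Θ * (1 + ‖x - z‖ / ρ) ^ (2 * m) / volume.real (ball x ρ)) *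
          ∫⁻ w, ENNReal.ofReal ((1 + ‖x - w‖ / ρ) ^ m)⁻¹ * g w := by
  obtain ⟨C, hC, hK⟩ := exists_heatKernel_mul_one_add_pow_le V m
  refine ⟨C, hC, fun {ρ Θ u g x} hρ hug hu z ↦ ?_⟩
  set P := C * (1 + ‖x - z‖ / ρ) ^ (2 * m) / volume.real (ball x ρ) with hP
  rw [← lintegral_const_mul' _ _ ofReal_ne_top]
  refine (enorm_integral_le_lintegral_enorm _).trans (lintegral_mono fun w ↦ ?_)
  have hK₀ := heatKernel_nonneg (s := 3 * ρ ^ 2) (by positivity) (z - w)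
  have hsqrt : √(Θ * (1 + ‖x - w‖ / ρ) ^ (2 * m)) = √Θ * (1 + ‖x - w‖ / ρ) ^ m := by
    rw [sqrt_mul' _ (by positivity), pow_mul', sqrt_sq (by positivity)]
  calc ‖heatKernel (3 * ρ ^ 2) (z - w) * u w‖ₑ
      = ENNReal.ofReal (heatKernel (3 * ρ ^ 2) (z - w)) * ‖u w‖ₑ := by
        rw [enorm_mul, Real.enorm_of_nonneg hK₀]
    _ ≤ ENNReal.ofReal (heatKernel (3 * ρ ^ 2) (z - w)) *
        (ENNReal.ofReal (√Θ * (1 + ‖x - w‖ / ρ) ^ m) * g w) := by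
        gcongr
        exact hsqrt ▸ enorm_le_ofReal_sqrt_mul (hu w) (hug w)
    _ = ENNReal.ofReal (√Θ * (heatKernel (3 * ρ ^ 2) (z - w) * (1 + ‖x - w‖ / ρ) ^ m)) * g w := by
        rw [← mul_assoc, ← ofReal_mul hK₀, mul_left_comm]
    _ ≤ ENNReal.ofReal (√Θ * (P * ((1 + ‖x - w‖ / ρ) ^ m)⁻¹)) * g w := by
        gcongr ENNReal.ofReal (√Θ * ?_) * g w
        exact hK hρ x z w
    _ = _ := by
        rw [← mul_assoc, ofReal_mul (by positivity), mul_assoc, hP]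
        congr 2
        ring

variable (V) in
lemma exists_abs_heat_le_of_hlMaximal_le [Nontrivial V] :
    ∃ C > 0, ∀ {ρ Θ A : ℝ} {u : V → ℝ} {g : V → ℝ≥0∞} {x : V}, 0 < ρ → 0 ≤ A → Measurable g →
      (∀ w, ‖u w‖ₑ ≤ g w ^ 2) → hlMaximal volume g x ≤ ENNReal.ofReal A →
      (∀ w, |u w| ≤ Θ * (1 + ‖x - w‖ / ρ) ^ (2 * (finrank ℝ V + 1))) → ∀ z,
      |heat (3 * ρ ^ 2) u z| ≤
        C * A * √Θ * (1 + ‖x - z‖ / ρ) ^ (2 * (finrank ℝ V + 1)) := by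
  set m := finrank ℝ V + 1
  obtain ⟨C, hC, hheat⟩ := exists_enorm_heat_le_mul_lintegral V m
  refine ⟨C * 2 ^ (m + 1), by positivity, fun {ρ Θ A u g x} hρ hA hg hug hgA hu z ↦ ?_⟩
  set v := volume.real (ball x ρ)
  have hv₀ : 0 < v := toReal_pos (measure_ball_pos _ _ hρ).ne' measure_ball_lt_top.ne
  set P := C * √Θ * (1 + ‖x - z‖ / ρ) ^ (2 * m) / v with hP
  have henorm : ‖heat (3 * ρ ^ 2) u z‖ₑ ≤ ENNReal.ofReal (P * (2 ^ (m + 1) * v * A)) := by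
    calc _ ≤ ENNReal.ofReal P * ∫⁻ w, ENNReal.ofReal ((1 + ‖x - w‖ / ρ) ^ m)⁻¹ * g w :=
          hheat hρ hug hu z
      _ ≤ ENNReal.ofReal P * (2 ^ (m + 1) * volume (ball x ρ) * ENNReal.ofReal A) := by
          gcongr
          exact (lintegral_inv_one_add_pow_mul_le hg x hρ).trans (by gcongr)
      _ = _ := by
          rw [← ofReal_measureReal measure_ball_lt_top.ne, ofReal_mul (by positivity),
            ofReal_mul (by positivity), ofReal_mul (by positivity), ofReal_pow zero_le_two,
            ofReal_ofNat]
  rw [enorm_eq_ofReal_abs, ofReal_le_ofReal_iff (by positivity)] at henorm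
  refine henorm.trans_eq ?_
  rw [hP]
  field_simp

end TangentialBound

section DyadicScales

open Module

variable {V : Type*} [NormedAddCommGroup V] [InnerProductSpace ℝ V] [FiniteDimensional ℝ V]
  [MeasurableSpace V] [BorelSpace V] {r : ℝ} {f : V → ℝ}

lemma heat_div_two_pow_sq (hr : 0 < r) (hf : Integrable f) (k : ℕ) :
    heat ((r / 2 ^ k) ^ 2) f =
      heat (3 * (r / 2 ^ (k + 1)) ^ 2) (heat ((r / 2 ^ (k + 1)) ^ 2) f) := by
  ext x
  rw [heat_heat (by positivity) (by positivity) hf, pow_succ]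
  congr 1
  field_simp
  ring

lemma exists_abs_heat_div_two_pow_sq_le (hr : 0 < r) (hf : Integrable f) :
    ∃ B : ℝ, ∀ (k : ℕ) (x : V),
      |heat ((r / 2 ^ k) ^ 2) f x| ≤ B * (2 ^ finrank ℝ V) ^ k := by
  refine ⟨(4 * π * r ^ 2) ^ (-(finrank ℝ V : ℝ) / 2) * ∫ z, |f z|, fun k x ↦
    (abs_heat_le (by positivity) hf x).trans_eq ?_⟩
  have hpow : ((2 ^ k : ℝ) ^ 2) ^ ((finrank ℝ V : ℝ) / 2) = (2 ^ finrank ℝ V) ^ k := by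
    rw [← Real.rpow_natCast _ 2, ← rpow_mul (by positivity), Nat.cast_two,
      mul_div_cancel₀ _ two_ne_zero, Real.rpow_natCast, pow_right_comm]
  rw [div_pow, mul_div_assoc', div_rpow (by positivity) (by positivity), neg_div,
    rpow_neg (x := (2 ^ k) ^ 2) (by positivity), div_inv_eq_mul, hpow]
  ring

variable (V) in
lemma exists_abs_heat_div_two_pow_sq_le_mul_sqrt [Nontrivial V] :
    ∃ C > 0, ∀ {R r A Θ : ℝ} {f : V → ℝ} {x : V} {k : ℕ}, 0 < r → r < R → 0 ≤ A → Integrable f →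
      hlMaximal volume (fun w ↦ heatMaximal R f w ^ (2⁻¹ : ℝ)) x ≤ ENNReal.ofReal A →
      (∀ w, |heat ((r / 2 ^ (k + 1)) ^ 2) f w| ≤
        Θ * (1 + ‖x - w‖ / (r / 2 ^ (k + 1))) ^ (2 * (finrank ℝ V + 1))) → ∀ z,
      |heat ((r / 2 ^ k) ^ 2) f z| ≤
        C * A * √Θ * (1 + ‖x - z‖ / (r / 2 ^ k)) ^ (2 * (finrank ℝ V + 1)) := by
  set p := 2 * (finrank ℝ V + 1)
  obtain ⟨C, hC, hstep⟩ := exists_abs_heat_le_of_hlMaximal_le V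
  refine ⟨C * 2 ^ p, by positivity, fun {R r A Θ f x k} hr hrR hA hf hxA hΘ z ↦ ?_⟩
  have hsmall (w : V) :
      ‖heat ((r / 2 ^ (k + 1)) ^ 2) f w‖ₑ ≤ (heatMaximal R f w ^ (2⁻¹ : ℝ)) ^ 2 := by
    rw [← ENNReal.rpow_natCast, ← ENNReal.rpow_mul, Nat.cast_two, inv_mul_cancel₀ two_ne_zero,
      ENNReal.rpow_one]
    refine enorm_heat_le_heatMaximal (by positivity) (lt_of_le_of_lt ?_ hrR) f w
    exact div_le_self hr.le (one_le_pow₀ one_le_two)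
  have hscale : 1 + ‖x - z‖ / (r / 2 ^ (k + 1)) ≤ 2 * (1 + ‖x - z‖ / (r / 2 ^ k)) := by
    have : ‖x - z‖ / (r / 2 ^ (k + 1)) = 2 * (‖x - z‖ / (r / 2 ^ k)) := by
      rw [pow_succ]
      field_simp
    linarith
  rw [heat_div_two_pow_sq hr hf k]
  calc _ ≤ C * A * √Θ * (1 + ‖x - z‖ / (r / 2 ^ (k + 1))) ^ p :=
        hstep (by positivity) hA ((measurable_heatMaximal hf R).pow_const _) hsmall hxA hΘ z
    _ ≤ C * A * √Θ * (2 * (1 + ‖x - z‖ / (r / 2 ^ k))) ^ p := by gcongr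
    _ = _ := by rw [mul_pow]; ring

variable (V) in
lemma exists_abs_heat_le_of_hlMaximal_sqrt_heatMaximal_le [Nontrivial V] :
    ∃ C > 0, ∀ {R r A : ℝ} {f : V → ℝ} {x : V}, 0 < r → r < R → 0 ≤ A → Integrable f →
      hlMaximal volume (fun w ↦ heatMaximal R f w ^ (2⁻¹ : ℝ)) x ≤ ENNReal.ofReal A →
      ∀ k z, |heat ((r / 2 ^ k) ^ 2) f z| ≤
        C * A ^ 2 * (1 + ‖x - z‖ / (r / 2 ^ k)) ^ (2 * (finrank ℝ V + 1)) := by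
  set p := 2 * (finrank ℝ V + 1)
  obtain ⟨C, hC, hstep⟩ := exists_abs_heat_div_two_pow_sq_le_mul_sqrt V
  refine ⟨C ^ 2 * 2 ^ finrank ℝ V, by positivity, fun {R r A f x} hr hrR hA hf hxA k z ↦ ?_⟩
  obtain ⟨B, hbdd⟩ := exists_abs_heat_div_two_pow_sq_le hr hf
  set u : ℕ → V → ℝ := fun k ↦ heat ((r / 2 ^ k) ^ 2) f
  set W : ℕ → V → ℝ := fun k z ↦ (1 + ‖x - z‖ / (r / 2 ^ k)) ^ p
  set X : ℕ → ℝ := fun k ↦ ⨆ z, |u k z| / W k z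
  have hW (k : ℕ) (z : V) : 1 ≤ W k z := one_le_pow₀ (le_add_of_nonneg_right (by positivity))
  have hquot (k : ℕ) (z : V) : |u k z| / W k z ≤ B * (2 ^ finrank ℝ V) ^ k :=
    (div_le_self (abs_nonneg _) (hW k z)).trans (hbdd k z)
  have huX (k : ℕ) (z : V) : |u k z| ≤ X k * W k z := by
    rw [← div_le_iff₀ (zero_lt_one.trans_le (hW k z))]
    exact le_ciSup (f := fun z ↦ |u k z| / W k z) ⟨_, Set.forall_mem_range.2 (hquot k)⟩ z
  have hX₀ (k : ℕ) : 0 ≤ X k := iSup_nonneg fun z ↦ div_nonneg (abs_nonneg _) (by positivity)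
  have hXstep (k : ℕ) : X k ^ 2 ≤ C ^ 2 * A ^ 2 * X (k + 1) := by
    have hle (z : V) : |u k z| / W k z ≤ C * A * √(X (k + 1)) := by
      rw [div_le_iff₀ (zero_lt_one.trans_le (hW k z))]
      exact hstep hr hrR hA hf hxA (huX (k + 1)) z
    calc X k ^ 2 ≤ (C * A * √(X (k + 1))) ^ 2 := by
          gcongr
          exacts [hX₀ k, ciSup_le hle]
      _ = _ := by rw [mul_pow, mul_pow, sq_sqrt (hX₀ _)]
  have hXk := le_mul_of_sq_le_mul_succ hX₀ (by positivity) (one_le_pow₀ one_le_two)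
    (fun k ↦ ciSup_le (hquot k)) hXstep k
  calc |u k z| ≤ X k * W k z := huX k z
    _ ≤ C ^ 2 * A ^ 2 * 2 ^ finrank ℝ V * W k z := by gcongr
    _ = _ := by ring

end DyadicScales

section HeatGrowth

open Module

lemma le_mul_one_add_infDist_div_pow {X : Type*} [MetricSpace X] [ProperSpace X] {S : Set X}
    (hS : S.Nonempty) {c lam ρ : ℝ} {p : ℕ} {z : X}
    (h : ∀ x ∈ S, c ≤ lam * (1 + dist z x / ρ) ^ p) : c ≤ lam * (1 + infDist z S / ρ) ^ p := by
  obtain ⟨y, hy, hzy⟩ := isClosed_closure.exists_infDist_eq_dist hS.closure z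
  rw [← infDist_closure, hzy]
  refine closure_minimal (t := {x | c ≤ lam * (1 + dist z x / ρ) ^ p}) h ?_ hy
  exact isClosed_le continuous_const (by fun_prop)

variable {V : Type*} [NormedAddCommGroup V] [InnerProductSpace ℝ V] [FiniteDimensional ℝ V]
  [MeasurableSpace V] [BorelSpace V] {r lam : ℝ} {p : ℕ} {D f : V → ℝ}

lemma exists_pow_mul_volume_lt_hlMaximal_le [Nontrivial V] {g : V → ℝ≥0∞} (hg : Measurable g)
    {N : ℕ} (hN : 0 < N) :
    ∃ i < N, 4 ^ i * volume {x | 2 * 2 ^ i < hlMaximal volume g x} ≤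
      2 * 5 ^ finrank ℝ V * (∫⁻ x, g x ^ 2) / N := by
  obtain ⟨i, hi, hmin⟩ := (Finset.range N).exists_min_image
    (fun i ↦ 4 ^ i * volume {x | 2 * 2 ^ i < hlMaximal volume g x}) ⟨0, Finset.mem_range.2 hN⟩
  refine ⟨i, Finset.mem_range.1 hi, ?_⟩
  rw [ENNReal.le_div_iff_mul_le (.inl (by simpa using hN.ne')) (.inl (natCast_ne_top N)), mul_comm]
  have hcard := Finset.card_nsmul_le_sum _ _ _ hmin
  rw [Finset.card_range, nsmul_eq_mul] at hcard
  exact hcard.trans (sum_four_pow_mul_meas_lt_hlMaximal_le hg N)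

/-- Control of the heat extension of `f` on the dyadic scales `r / 2 ^ k` by a constant `lam`,
with polynomial loss away from the zero set of the (distance-like) function `D`. -/
def HeatGrowthBound (r : ℝ) (p : ℕ) (lam : ℝ) (D f : V → ℝ) : Prop :=
  ∀ k x, |heat ((r / 2 ^ k) ^ 2) f x| ≤ lam * (1 + D x / (r / 2 ^ k)) ^ p

lemma HeatGrowthBound.ae_abs_le (h : HeatGrowthBound r p lam D f) (hr : 0 < r)
    (hf : Integrable f) : ∀ᵐ x, D x = 0 → |f x| ≤ lam := by
  obtain ⟨ns, hns⟩ := exists_seq_ae_tendsto_heat hf (tendsto_div_two_pow_sq_nhdsGT_zero hr)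
  filter_upwards [hns] with x hx hDx
  refine le_of_tendsto hx.abs (.of_forall fun i ↦ ?_)
  simpa only [hDx, zero_div, add_zero, one_pow, mul_one] using h (ns i) x

lemma nonempty_of_volume_compl_ne_top [Nontrivial V] {S : Set V} (hS : volume Sᶜ ≠ ⊤) :
    S.Nonempty := by
  have : NoncompactSpace V := NormedSpace.noncompactSpace ℝ V
  by_contra hempty
  rw [Set.not_nonempty_iff_eq_empty] at hempty
  exact hS (by rw [hempty, Set.compl_empty, measure_univ_of_isAddLeftInvariant])

lemma exists_hlMaximal_sqrt_heatMaximal_le [Nontrivial V] {R M : ℝ} (hf : Integrable f)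
    (hM : ∫⁻ x, heatMaximal R f x ≤ ENNReal.ofReal M) {N : ℕ} (hN : 0 < N) :
    ∃ i < N, ∃ S : Set V, S.Nonempty ∧
      (∀ x ∈ S, hlMaximal volume (fun w ↦ heatMaximal R f w ^ (2⁻¹ : ℝ)) x ≤
        ENNReal.ofReal (2 * 2 ^ i)) ∧
      4 ^ i * volume Sᶜ ≤ ENNReal.ofReal (2 * 5 ^ finrank ℝ V * M / N) := by
  set g : V → ℝ≥0∞ := fun w ↦ heatMaximal R f w ^ (2⁻¹ : ℝ)
  have hg : Measurable g := (measurable_heatMaximal hf R).pow_const _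
  have hg2 (w : V) : g w ^ 2 = heatMaximal R f w := by
    rw [← ENNReal.rpow_natCast, ← ENNReal.rpow_mul, Nat.cast_two, inv_mul_cancel₀ two_ne_zero,
      ENNReal.rpow_one]
  obtain ⟨i, hiN, hi⟩ := exists_pow_mul_volume_lt_hlMaximal_le hg hN
  have hvol : 4 ^ i * volume {x | hlMaximal volume g x ≤ 2 * 2 ^ i}ᶜ ≤
      ENNReal.ofReal (2 * 5 ^ finrank ℝ V * M / N) := by
    simp only [Set.compl_ofPred, not_le]
    refine hi.trans ?_
    rw [ofReal_div_of_pos (by positivity), ofReal_mul (by positivity), ofReal_natCast]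
    simp only [hg2]
    gcongr
    rw [ofReal_mul zero_le_two, ofReal_pow (by norm_num), ofReal_ofNat, ofReal_ofNat]
  refine ⟨i, hiN, _, nonempty_of_volume_compl_ne_top fun htop ↦ ?_, fun x hx ↦ ?_, hvol⟩
  · rw [htop, ENNReal.mul_top (by positivity)] at hvol
    exact ofReal_ne_top (top_le_iff.1 hvol)
  · rwa [ofReal_mul zero_le_two, ofReal_pow zero_le_two, ofReal_ofNat]

variable (V) in
lemma exists_heatGrowthBound [Nontrivial V] :
    ∃ C > 0, ∀ {R r M : ℝ} {f : V → ℝ} {N : ℕ}, 0 < r → r < R → 0 < N → Integrable f →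
      ∫⁻ x, heatMaximal R f x ≤ ENNReal.ofReal M →
      ∃ lam D, 1 ≤ lam ∧ lam ≤ C * 4 ^ N ∧ LipschitzWith 1 D ∧ (∀ x, 0 ≤ D x) ∧
        ENNReal.ofReal lam * volume {x | 0 < D x} ≤ ENNReal.ofReal (C * M / N) ∧
        HeatGrowthBound r (2 * (finrank ℝ V + 1)) lam D f := by
  obtain ⟨C, hC, hbound⟩ := exists_abs_heat_le_of_hlMaximal_sqrt_heatMaximal_le V
  set d := finrank ℝ V
  refine ⟨4 * (C + 1) * (2 * 5 ^ d), by positivity, fun {R r M f N} hr hrR hN hf hM ↦ ?_⟩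
  obtain ⟨i, hiN, S, hS, hSle, hvol⟩ := exists_hlMaximal_sqrt_heatMaximal_le hf hM hN
  have hi1 : (1 : ℝ) ≤ 4 ^ i := one_le_pow₀ (by norm_num)
  refine ⟨4 * (C + 1) * 4 ^ i, fun x ↦ infDist x S, by nlinarith, ?_, lipschitz_infDist_pt S,
    fun x ↦ infDist_nonneg, ?_, fun k z ↦ le_mul_one_add_infDist_div_pow hS fun x hx ↦ ?_⟩
  · have h5 : (1 : ℝ) ≤ 5 ^ d := one_le_pow₀ (by norm_num)
    have h4 : (4 : ℝ) ^ i ≤ 4 ^ N := pow_le_pow_right₀ (by norm_num) hiN.le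
    calc 4 * (C + 1) * 4 ^ i ≤ 4 * (C + 1) * (1 * 4 ^ N) := by rw [one_mul]; gcongr
      _ ≤ 4 * (C + 1) * (2 * 5 ^ d * 4 ^ N) := by gcongr; linarith
      _ = _ := by ring
  · have hsub : {x | 0 < infDist x S} ⊆ Sᶜ := fun x hx hxS ↦
      (infDist_zero_of_mem hxS).not_gt hx
    calc _ ≤ ENNReal.ofReal (4 * (C + 1) * 4 ^ i) * volume Sᶜ := by gcongr
      _ = ENNReal.ofReal (4 * (C + 1)) * (4 ^ i * volume Sᶜ) := by
          rw [ofReal_mul (by positivity), ofReal_pow (by norm_num), ofReal_ofNat, mul_assoc]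
      _ ≤ ENNReal.ofReal (4 * (C + 1)) * ENNReal.ofReal (2 * 5 ^ d * M / N) := by gcongr
      _ = _ := by rw [← ofReal_mul (by positivity)]; congr 1; ring
  · rw [dist_comm, dist_eq_norm]
    calc |heat ((r / 2 ^ k) ^ 2) f z|
        ≤ C * (2 * 2 ^ i) ^ 2 * (1 + ‖x - z‖ / (r / 2 ^ k)) ^ (2 * (d + 1)) :=
          hbound hr hrR (by positivity) hf (hSle x hx) k z
      _ = 4 * C * 4 ^ i * (1 + ‖x - z‖ / (r / 2 ^ k)) ^ (2 * (d + 1)) := by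
          rw [mul_pow, ← pow_mul, mul_comm i, pow_mul]
          norm_num only
          ring
      _ ≤ _ := by gcongr; linarith

end HeatGrowth

section HeatIndicator

variable {V : Type*} [NormedAddCommGroup V] [InnerProductSpace ℝ V] [FiniteDimensional ℝ V]
  [MeasurableSpace V] [BorelSpace V] {lam : ℝ} {N : ℕ} {L : ℝ≥0} {D u v ψ : V → ℝ}

lemma abs_indicator_one_le {X : Type*} (S : Set X) (x : X) :
    |S.indicator (1 : X → ℝ) x| ≤ 1 := by
  by_cases h : x ∈ S <;> simp [h]

variable (V) in
lemma exists_one_add_pow_mul_heat_indicator_le (N : ℕ) :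
    ∃ C > 0, ∀ {D : V → ℝ} {ρ : ℝ}, LipschitzWith 1 D → 0 < ρ → ∀ z, 0 ≤ D z →
      (1 + D z / ρ) ^ N * heat (3 * ρ ^ 2) ({x | D x < ρ}.indicator 1) z ≤ C := by
  obtain ⟨C, hC, hK⟩ := exists_one_add_pow_mul_heatKernel_le V N
  refine ⟨2 ^ N * C, by positivity, fun {D ρ} hD hρ z hz ↦ ?_⟩
  have hle (w : V) : (1 + D z / ρ) ^ N * (heatKernel (3 * ρ ^ 2) (z - w) *
      {x | D x < ρ}.indicator 1 w) ≤ 2 ^ N * C * heatKernel (6 * ρ ^ 2) (z - w) := by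
    have hK₆ := heatKernel_nonneg (s := 6 * ρ ^ 2) (by positivity) (z - w)
    have hK₃ := heatKernel_nonneg (s := 3 * ρ ^ 2) (by positivity) (z - w)
    by_cases hw : D w < ρ
    · have hDz : 1 + D z / ρ ≤ 2 * (1 + ‖z - w‖ / ρ) := by
        have := hD.le_add_mul z w
        rw [NNReal.coe_one, one_mul, dist_eq_norm] at this
        rw [← sub_nonneg]
        have : 0 ≤ (ρ + 2 * ‖z - w‖ - D z) / ρ := by
          have := norm_nonneg (z - w)
          exact div_nonneg (by linarith) hρ.le
        convert this using 1
        field_simp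
        ring
      have hKle := hK (s := 3 * ρ ^ 2) (by positivity) hρ (by nlinarith) (z - w)
      rw [← mul_assoc, show (2 : ℝ) * 3 = 6 by norm_num] at hKle
      rw [Set.indicator_of_mem (by exact hw), Pi.one_apply, mul_one]
      calc _ ≤ (2 * (1 + ‖z - w‖ / ρ)) ^ N * heatKernel (3 * ρ ^ 2) (z - w) := by gcongr
        _ = 2 ^ N * ((1 + ‖z - w‖ / ρ) ^ N * heatKernel (3 * ρ ^ 2) (z - w)) := by
          rw [mul_pow, mul_assoc]
        _ ≤ 2 ^ N * (C * heatKernel (6 * ρ ^ 2) (z - w)) := by gcongr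
        _ = _ := by ring
    · rw [Set.indicator_of_notMem (by exact hw), mul_zero, mul_zero]
      positivity
  rw [heat, ← integral_const_mul]
  calc _ ≤ ∫ w, 2 ^ N * C * heatKernel (6 * ρ ^ 2) (z - w) := by
        refine integral_mono ?_ ?_ hle
        · exact (integrable_heatKernel_sub_mul_of_bdd (by positivity)
            (aestronglyMeasurable_one.indicator (measurableSet_lt hD.continuous.measurable
              measurable_const)) (abs_indicator_one_le _) z).const_mul _
        · exact ((integrable_heatKernel (by positivity)).comp_sub_left z).const_mul _
    _ = 2 ^ N * C := by
        rw [integral_const_mul, integral_heatKernel_sub (by positivity), mul_one]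

variable (V) in
lemma exists_one_add_pow_mul_heat_indicator_le_div (N : ℕ) :
    ∃ C > 0, ∀ {D : V → ℝ} {ρ : ℝ}, LipschitzWith 1 D → 0 < ρ → ∀ z, 0 < D z →
      (1 + D z / ρ) ^ N * heat (3 * ρ ^ 2) ({x | D x < ρ}.indicator 1) z ≤ C * (ρ / D z) := by
  obtain ⟨C, hC, h⟩ := exists_one_add_pow_mul_heat_indicator_le V (N + 1)
  refine ⟨C, hC, fun {D ρ} hD hρ z hz ↦ ?_⟩
  have ha : 0 ≤ heat (3 * ρ ^ 2) ({x | D x < ρ}.indicator 1) z :=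
    heat_nonneg (by positivity) (fun x ↦ Set.indicator_nonneg (by simp) x) z
  calc _ = ρ / D z * ((1 + D z / ρ) ^ N * (D z / ρ) *
          heat (3 * ρ ^ 2) ({x | D x < ρ}.indicator 1) z) := by field_simp
    _ ≤ ρ / D z * ((1 + D z / ρ) ^ N * (1 + D z / ρ) *
          heat (3 * ρ ^ 2) ({x | D x < ρ}.indicator 1) z) := by gcongr; linarith
    _ ≤ ρ / D z * C := by rw [← pow_succ]; gcongr; exact h hD hρ z hz.le
    _ = C * (ρ / D z) := mul_comm _ _

end HeatIndicator

section ScaleChange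

variable {V : Type*} [NormedAddCommGroup V] [InnerProductSpace ℝ V] [FiniteDimensional ℝ V]
  [MeasurableSpace V] [BorelSpace V] {ρ s : ℝ} {D : V → ℝ}

lemma volume_const_le_ne_top (hvol : volume {x | 0 < D x} ≠ ⊤) (hρ : 0 < ρ) :
    volume {x | ρ ≤ D x} ≠ ⊤ :=
  measure_ne_top_of_subset (fun _ hx ↦ hρ.trans_le hx) hvol

lemma integrableOn_div (hD : Measurable D) (hvol : volume {x | 0 < D x} ≠ ⊤) (hρ : 0 < ρ) :
    IntegrableOn (fun x ↦ ρ / D x) {x | ρ ≤ D x} := by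
  refine Measure.integrableOn_of_bounded (volume_const_le_ne_top hvol hρ)
    (measurable_const.div hD).aestronglyMeasurable (M := 1) ?_
  filter_upwards [ae_restrict_mem (measurableSet_le measurable_const hD)] with x hx
  rw [norm_of_nonneg (div_nonneg hρ.le (hρ.le.trans hx))]
  exact div_le_one_of_le₀ hx (hρ.le.trans hx)

lemma integrable_indicator_const_le (hD : Measurable D) (hvol : volume {x | 0 < D x} ≠ ⊤)
    (hρ : 0 < ρ) : Integrable ({x | ρ ≤ D x}.indicator (1 : V → ℝ)) :=
  (integrable_indicator_iff (measurableSet_le measurable_const hD)).2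
    (integrableOn_const (volume_const_le_ne_top hvol hρ))

lemma heat_indicator_nonneg (hs : 0 < s) (S : Set V) (x : V) : 0 ≤ heat s (S.indicator 1) x :=
  heat_nonneg hs (fun _ ↦ Set.indicator_nonneg (fun _ _ ↦ zero_le_one) _) x

lemma heat_indicator_compl (hs : 0 < s) {S : Set V} (hS : MeasurableSet S) (x : V) :
    heat s (Sᶜ.indicator 1) x = 1 - heat s (S.indicator 1) x := by
  rw [← heat_const hs 1 x, heat, heat, heat, ← integral_sub]
  · refine integral_congr_ae (.of_forall fun z ↦ ?_)
    simp only [Set.indicator_compl, Pi.sub_apply, Pi.one_apply, mul_sub]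
  · exact ((integrable_heatKernel hs).comp_sub_left x).mul_const 1
  · exact integrable_heatKernel_sub_mul_of_bdd hs (aestronglyMeasurable_one.indicator hS)
      (abs_indicator_one_le S) x

variable (V) in
lemma exists_setIntegral_heat_indicator_le :
    ∃ C > 0, ∀ {D : V → ℝ} {ρ : ℝ}, LipschitzWith 1 D → volume {x | 0 < D x} ≠ ⊤ → 0 < ρ →
      ∫ x in {x | D x < ρ}, heat (3 * ρ ^ 2) ({x | ρ ≤ D x}.indicator 1) x ≤
        C * ∫ x in {x | ρ ≤ D x}, ρ / D x := by
  obtain ⟨C, hC, h⟩ := exists_one_add_pow_mul_heat_indicator_le_div V 0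
  refine ⟨C, hC, fun {D ρ} hD hvol hρ ↦ ?_⟩
  have hσ : 0 < 3 * ρ ^ 2 := by positivity
  have hDm := hD.continuous.measurable
  have hlt : MeasurableSet {x | D x < ρ} := measurableSet_lt hDm measurable_const
  have hge : MeasurableSet {x | ρ ≤ D x} := measurableSet_le measurable_const hDm
  have hsymm := integral_mul_heat hσ (integrable_indicator_const_le hDm hvol hρ)
    (aestronglyMeasurable_one.indicator hlt) (abs_indicator_one_le _)
  calc _ = ∫ x, {x | D x < ρ}.indicator 1 x *
          heat (3 * ρ ^ 2) ({x | ρ ≤ D x}.indicator 1) x := by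
        rw [← integral_indicator hlt]
        simp only [← Set.indicator_mul_left, Pi.one_apply, one_mul]
    _ = ∫ x in {x | ρ ≤ D x}, heat (3 * ρ ^ 2) ({x | D x < ρ}.indicator 1) x := by
        rw [hsymm, ← integral_indicator hge]
        simp only [← Set.indicator_mul_right, Pi.one_apply, mul_one]
    _ ≤ ∫ x in {x | ρ ≤ D x}, C * (ρ / D x) := by
        refine integral_mono_of_nonneg (.of_forall (heat_indicator_nonneg hσ _))
          ((integrableOn_div hDm hvol hρ).const_mul C) ?_
        filter_upwards [ae_restrict_mem hge] with x hx
        simpa only [pow_zero, one_mul] using h hD hρ x (hρ.trans_le hx)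
    _ = _ := integral_const_mul _ _

variable (V) in
lemma exists_abs_heat_indicator_sub_mul_le (N : ℕ) :
    ∃ C > 0, ∀ {D u : V → ℝ} {ρ lam : ℝ}, LipschitzWith 1 D → (∀ x, 0 ≤ D x) → 0 < ρ → 0 ≤ lam →
      (∀ x, |u x| ≤ lam * (1 + D x / ρ) ^ N) → ∀ x,
      |heat (3 * ρ ^ 2) ({x | D x < ρ}.indicator 1) x - {x | D x < ρ}.indicator 1 x| * |u x| ≤
        {x | D x < ρ}.indicator
          (fun x ↦ 2 ^ N * lam * heat (3 * ρ ^ 2) ({x | ρ ≤ D x}.indicator 1) x) x +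
        {x | ρ ≤ D x}.indicator (fun x ↦ C * lam * (ρ / D x)) x := by
  obtain ⟨C, hC, h⟩ := exists_one_add_pow_mul_heat_indicator_le_div V N
  refine ⟨C, hC, fun {D u ρ lam} hD hD₀ hρ hlam hu x ↦ ?_⟩
  have hσ : 0 < 3 * ρ ^ 2 := by positivity
  rcases lt_or_ge (D x) ρ with hx | hx
  · have hcompl : {x | D x < ρ} = {x | ρ ≤ D x}ᶜ := by ext; simp
    have hu' : |u x| ≤ lam * 2 ^ N := (hu x).trans <| by
      have := hD₀ x
      gcongr
      linarith [div_le_one_of_le₀ hx.le hρ.le]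
    have hb := heat_indicator_nonneg hσ {x | ρ ≤ D x} x
    rw [Set.indicator_of_mem (by exact hx), Set.indicator_of_mem (by exact hx),
      Set.indicator_of_notMem (by exact hx.not_ge), hcompl, heat_indicator_compl hσ
        (measurableSet_le measurable_const hD.continuous.measurable), Pi.one_apply,
      sub_sub_cancel_left, abs_neg, abs_of_nonneg hb, add_zero]
    calc _ ≤ heat (3 * ρ ^ 2) ({x | ρ ≤ D x}.indicator 1) x * (lam * 2 ^ N) := by gcongr
      _ = _ := by ring
  · have ha := heat_indicator_nonneg hσ {x | D x < ρ} x
    rw [Set.indicator_of_notMem (by exact hx.not_gt), Set.indicator_of_notMem (by exact hx.not_gt),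
      Set.indicator_of_mem (by exact hx), sub_zero, abs_of_nonneg ha, zero_add]
    calc _ ≤ heat (3 * ρ ^ 2) ({x | D x < ρ}.indicator 1) x * (lam * (1 + D x / ρ) ^ N) := by
          gcongr
          exact hu x
      _ = lam * ((1 + D x / ρ) ^ N * heat (3 * ρ ^ 2) ({x | D x < ρ}.indicator 1) x) := by ring
      _ ≤ lam * (C * (ρ / D x)) := mul_le_mul_of_nonneg_left (h hD hρ x (hρ.trans_le hx)) hlam
      _ = _ := by ring

variable (V) in
lemma exists_integral_abs_heat_indicator_sub_mul_le (N : ℕ) :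
    ∃ C > 0, ∀ {D u : V → ℝ} {ρ lam : ℝ}, LipschitzWith 1 D → (∀ x, 0 ≤ D x) →
      volume {x | 0 < D x} ≠ ⊤ → 0 < ρ → 0 ≤ lam → (∀ x, |u x| ≤ lam * (1 + D x / ρ) ^ N) →
      ∫ x, |heat (3 * ρ ^ 2) ({x | D x < ρ}.indicator 1) x - {x | D x < ρ}.indicator 1 x| *
        |u x| ≤ C * lam * ∫ x in {x | ρ ≤ D x}, ρ / D x := by
  obtain ⟨C₁, hC₁, h₁⟩ := exists_abs_heat_indicator_sub_mul_le V N
  obtain ⟨C₂, hC₂, h₂⟩ := exists_setIntegral_heat_indicator_le V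
  refine ⟨2 ^ N * C₂ + C₁, by positivity, fun {D u ρ lam} hD hD₀ hvol hρ hlam hu ↦ ?_⟩
  have hDm := hD.continuous.measurable
  have hlt : MeasurableSet {x | D x < ρ} := measurableSet_lt hDm measurable_const
  have hge : MeasurableSet {x | ρ ≤ D x} := measurableSet_le measurable_const hDm
  have hInt₁ := ((integrable_heat (by positivity : 0 < 3 * ρ ^ 2)
    (integrable_indicator_const_le hDm hvol hρ)).const_mul (2 ^ N * lam)).indicator hlt
  have hInt₂ := (integrable_indicator_iff hge).2
    ((integrableOn_div hDm hvol hρ).const_mul (C₁ * lam))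
  calc _ ≤ _ := integral_mono_of_nonneg (.of_forall fun x ↦ by positivity) (hInt₁.add hInt₂)
        (.of_forall (h₁ hD hD₀ hρ hlam hu))
    _ = 2 ^ N * lam * (∫ x in {x | D x < ρ}, heat (3 * ρ ^ 2) ({x | ρ ≤ D x}.indicator 1) x) +
          C₁ * lam * ∫ x in {x | ρ ≤ D x}, ρ / D x := by
        simp only [Pi.add_apply]
        rw [integral_add hInt₁ hInt₂, integral_indicator hlt, integral_indicator hge,
          integral_const_mul, integral_const_mul]
    _ ≤ 2 ^ N * lam * (C₂ * ∫ x in {x | ρ ≤ D x}, ρ / D x) +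
          C₁ * lam * ∫ x in {x | ρ ≤ D x}, ρ / D x := by
        gcongr
        exact h₂ hD hvol hρ
    _ = _ := by ring

end ScaleChange

section Telescoping

variable {V : Type*} [NormedAddCommGroup V] [InnerProductSpace ℝ V] [FiniteDimensional ℝ V]
  [MeasurableSpace V] [BorelSpace V] {r B lam : ℝ} {N : ℕ} {L : ℝ≥0} {D f ψ : V → ℝ}

variable (V) in
lemma exists_abs_integral_mul_heat_sub_le :
    ∃ C > 0, ∀ {s B : ℝ} {L : ℝ≥0} {ψ a v : V → ℝ}, 0 < s → LipschitzWith L ψ →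
      (∀ x, |ψ x| ≤ B) → AEStronglyMeasurable a → (∀ x, |a x| ≤ 1) → Integrable v →
      |(∫ x, ψ x * a x * heat s v x) - ∫ x, ψ x * a x * v x| ≤
        C * L * √s * (∫ x, |v x|) + B * ∫ x, |heat s a x - a x| * |v x| := by
  obtain ⟨C, hC, h⟩ := exists_abs_heat_mul_sub_le V
  refine ⟨C, hC, fun {s B L ψ a v} hs hψ hψB ha ha₁ hv ↦ ?_⟩
  have hψa : AEStronglyMeasurable (fun x ↦ ψ x * a x) := hψ.continuous.aestronglyMeasurable.mul ha
  have hψaB (x : V) : |ψ x * a x| ≤ B := by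
    rw [abs_mul]
    exact (mul_le_of_le_one_right (abs_nonneg _) (ha₁ x)).trans (hψB x)
  have hle (x : V) : ‖heat s (fun z ↦ ψ z * a z) x * v x - ψ x * a x * v x‖ ≤
      C * L * √s * |v x| + B * (|heat s a x - a x| * |v x|) := by
    rw [show heat s (fun z ↦ ψ z * a z) x * v x - ψ x * a x * v x =
      (heat s (fun z ↦ ψ z * a z) x - ψ x * heat s a x) * v x +
        ψ x * ((heat s a x - a x) * v x) by ring]
    refine (norm_add_le _ _).trans ?_
    simp only [norm_eq_abs, abs_mul]
    gcongr
    exacts [h _ hs hψ ha ha₁ x, hψB x]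
  have hInt : Integrable fun x ↦ heat s (fun z ↦ ψ z * a z) x * v x :=
    hv.bdd_mul (aestronglyMeasurable_heat _ hψa) (.of_forall (abs_heat_le_of_bdd hs hψaB))
  have hInt' : Integrable fun x ↦ |heat s a x - a x| * |v x| :=
    hv.abs.bdd_mul (c := 1 + 1) ((aestronglyMeasurable_heat _ ha).sub ha).norm
      (.of_forall fun x ↦ (abs_abs _).trans_le <| (abs_sub _ _).trans <|
        add_le_add (abs_heat_le_of_bdd hs ha₁ x) (ha₁ x))
  rw [integral_mul_heat hs hv hψa hψaB,
    ← integral_sub hInt (hv.bdd_mul hψa (.of_forall hψaB)), ← norm_eq_abs]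
  refine (norm_integral_le_of_norm_le ((hv.abs.const_mul _).add (hInt'.const_mul _))
    (.of_forall hle)).trans_eq ?_
  simp only [Pi.add_apply]
  rw [integral_add (hv.abs.const_mul _) (hInt'.const_mul _), integral_const_mul,
    integral_const_mul]

variable (V) in
lemma exists_abs_setIntegral_mul_heat_sub_le (N : ℕ) :
    ∃ C > 0, ∀ {D v ψ : V → ℝ} {ρ lam B : ℝ} {L : ℝ≥0}, LipschitzWith 1 D → (∀ x, 0 ≤ D x) →
      volume {x | 0 < D x} ≠ ⊤ → LipschitzWith L ψ → (∀ x, |ψ x| ≤ B) → 0 < ρ → 0 ≤ lam →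
      Integrable v → (∀ x, |v x| ≤ lam * (1 + D x / ρ) ^ N) →
      |(∫ x in {x | D x < ρ}, ψ x * heat (3 * ρ ^ 2) v x) - ∫ x in {x | D x < ρ}, ψ x * v x| ≤
        C * (B * lam * (∫ x in {x | ρ ≤ D x}, ρ / D x) + L * ρ * ∫ x, |v x|) := by
  obtain ⟨C₁, hC₁, h₁⟩ := exists_integral_abs_heat_indicator_sub_mul_le V N
  obtain ⟨C₂, hC₂, h₂⟩ := exists_abs_integral_mul_heat_sub_le V
  refine ⟨C₁ + C₂ * √3, by positivity,
    fun {D v ψ ρ lam B L} hD hD₀ hvol hψ hψB hρ hlam hv hvle ↦ ?_⟩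
  have hS : MeasurableSet {x | D x < ρ} :=
    measurableSet_lt hD.continuous.measurable measurable_const
  have hB : 0 ≤ B := (abs_nonneg _).trans (hψB 0)
  have hset (g : V → ℝ) : ∫ x in {x | D x < ρ}, ψ x * g x =
      ∫ x, ψ x * {x | D x < ρ}.indicator 1 x * g x := by
    rw [← integral_indicator hS]
    congr with x
    by_cases hx : D x < ρ <;> simp [hx]
  have hT : 0 ≤ ∫ x in {x | ρ ≤ D x}, ρ / D x :=
    integral_nonneg fun x ↦ div_nonneg hρ.le (hD₀ x)
  rw [hset, hset]
  calc _ ≤ _ := h₂ (by positivity) hψ hψB (aestronglyMeasurable_one.indicator hS)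
        (abs_indicator_one_le _) hv
    _ ≤ C₂ * L * (√3 * ρ) * (∫ x, |v x|) +
          B * (C₁ * lam * ∫ x in {x | ρ ≤ D x}, ρ / D x) := by
        rw [sqrt_mul zero_le_three, sqrt_sq hρ.le]
        gcongr
        exact h₁ hD hD₀ hvol hρ hlam hvle
    _ = C₁ * (B * lam * ∫ x in {x | ρ ≤ D x}, ρ / D x) +
          C₂ * √3 * (L * ρ * ∫ x, |v x|) := by ring
    _ ≤ (C₁ + C₂ * √3) * (B * lam * ∫ x in {x | ρ ≤ D x}, ρ / D x) +
          (C₁ + C₂ * √3) * (L * ρ * ∫ x, |v x|) := by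
        gcongr
        · exact le_add_of_nonneg_right (by positivity)
        · exact le_add_of_nonneg_left hC₁.le
    _ = _ := (mul_add ..).symm

lemma abs_setIntegral_mul_le_of_le_of_lt (hD : LipschitzWith 1 D) (hD₀ : ∀ x, 0 ≤ D x)
    (hvol : volume {x | 0 < D x} ≠ ⊤) (hψB : ∀ x, |ψ x| ≤ B) {ρ : ℝ} (hρ : 0 < ρ)
    (hlam : 0 ≤ lam) {u : V → ℝ} (hu : ∀ x, |u x| ≤ lam * (1 + D x / (2 * ρ)) ^ N) :
    |∫ x in {x | ρ ≤ D x ∧ D x < 2 * ρ}, ψ x * u x| ≤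
      2 ^ (N + 1) * (B * lam * ∫ x in {x | ρ ≤ D x}, ρ / D x) := by
  have hDm := hD.continuous.measurable
  have hge : MeasurableSet {x | ρ ≤ D x} := measurableSet_le measurable_const hDm
  have hlt : MeasurableSet {x | D x < 2 * ρ} := measurableSet_lt hDm measurable_const
  have hB : 0 ≤ B := (abs_nonneg _).trans (hψB 0)
  have hsub : {x | ρ ≤ D x ∧ D x < 2 * ρ} ⊆ {x | ρ ≤ D x} := fun x hx ↦ hx.1
  have hInt : IntegrableOn (fun x ↦ 2 ^ (N + 1) * (B * lam) * (ρ / D x)) {x | ρ ≤ D x} :=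
    (integrableOn_div hDm hvol hρ).const_mul _
  calc _ ≤ ∫ x in {x | ρ ≤ D x ∧ D x < 2 * ρ}, 2 ^ (N + 1) * (B * lam) * (ρ / D x) := by
        refine norm_integral_le_of_norm_le (f := fun x ↦ ψ x * u x) (hInt.mono_set hsub) ?_
        filter_upwards [ae_restrict_mem (hge.inter hlt)] with x hx
        have hDx : 0 < D x := hρ.trans_le hx.1
        have hone : 1 ≤ 2 * (ρ / D x) := by
          rw [← mul_div_assoc, one_le_div₀ hDx]
          exact hx.2.le
        have hDρ : D x / (2 * ρ) ≤ 1 := div_le_one_of_le₀ hx.2.le (by positivity)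
        calc ‖ψ x * u x‖ ≤ B * (lam * (1 + D x / (2 * ρ)) ^ N) := by
              rw [norm_mul]
              gcongr
              exacts [hψB x, hu x]
          _ ≤ B * (lam * (1 + 1) ^ N) := by gcongr
          _ = 2 ^ N * (B * lam) * 1 := by ring
          _ ≤ 2 ^ N * (B * lam) * (2 * (ρ / D x)) := by gcongr
          _ = _ := by ring
    _ ≤ ∫ x in {x | ρ ≤ D x}, 2 ^ (N + 1) * (B * lam) * (ρ / D x) :=
        setIntegral_mono_set hInt (.of_forall fun x ↦ mul_nonneg (by positivity)
          (div_nonneg hρ.le (hD₀ x))) (.of_forall hsub)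
    _ = _ := by rw [integral_const_mul]; ring

lemma setIntegral_lt_two_mul_eq_add (hD : Measurable D) {ρ : ℝ} (hρ : 0 < ρ) {g : V → ℝ}
    (hg : Integrable g) : ∫ x in {x | D x < 2 * ρ}, g x =
      (∫ x in {x | D x < ρ}, g x) + ∫ x in {x | ρ ≤ D x ∧ D x < 2 * ρ}, g x := by
  have hann : MeasurableSet {x | ρ ≤ D x ∧ D x < 2 * ρ} :=
    (measurableSet_le measurable_const hD).inter (measurableSet_lt hD measurable_const)
  have hdisj : Disjoint {x | D x < ρ} {x | ρ ≤ D x ∧ D x < 2 * ρ} :=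
    Set.disjoint_left.2 fun x hx hx' ↦ hx'.1.not_gt hx
  have hunion : {x | D x < 2 * ρ} = {x | D x < ρ} ∪ {x | ρ ≤ D x ∧ D x < 2 * ρ} := by
    ext x
    refine ⟨fun hx ↦ (lt_or_ge (D x) ρ).imp_right fun h ↦ ⟨h, hx⟩, ?_⟩
    rintro ((hx : D x < ρ) | hx)
    exacts [hx.trans (by linarith), hx.2]
  rw [hunion, setIntegral_union hdisj hann hg.integrableOn hg.integrableOn]

variable (V) in
lemma exists_abs_setIntegral_two_mul_sub_le (N : ℕ) :
    ∃ C > 0, ∀ {D v ψ : V → ℝ} {ρ lam B : ℝ} {L : ℝ≥0}, LipschitzWith 1 D → (∀ x, 0 ≤ D x) →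
      volume {x | 0 < D x} ≠ ⊤ → LipschitzWith L ψ → (∀ x, |ψ x| ≤ B) → 0 < ρ → 0 ≤ lam →
      Integrable v → (∀ x, |v x| ≤ lam * (1 + D x / ρ) ^ N) →
      (∀ x, |heat (3 * ρ ^ 2) v x| ≤ lam * (1 + D x / (2 * ρ)) ^ N) →
      |(∫ x in {x | D x < 2 * ρ}, ψ x * heat (3 * ρ ^ 2) v x) -
          ∫ x in {x | D x < ρ}, ψ x * v x| ≤
        C * (B * lam * (∫ x in {x | ρ ≤ D x}, ρ / D x) + L * ρ * ∫ x, |v x|) := by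
  obtain ⟨C, hC, h⟩ := exists_abs_setIntegral_mul_heat_sub_le V N
  refine ⟨C + 2 ^ (N + 1), by positivity,
    fun {D v ψ ρ lam B L} hD hD₀ hvol hψ hψB hρ hlam hv hvle hule ↦ ?_⟩
  have hInt : Integrable fun x ↦ ψ x * heat (3 * ρ ^ 2) v x :=
    (integrable_heat (by positivity) hv).bdd_mul hψ.continuous.aestronglyMeasurable
      (.of_forall hψB)
  rw [setIntegral_lt_two_mul_eq_add hD.continuous.measurable hρ hInt, add_sub_right_comm]
  calc _ ≤ _ := abs_add_le _ _
    _ ≤ C * (B * lam * (∫ x in {x | ρ ≤ D x}, ρ / D x) + L * ρ * ∫ x, |v x|) +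
          2 ^ (N + 1) * (B * lam * (∫ x in {x | ρ ≤ D x}, ρ / D x) + L * ρ * ∫ x, |v x|) := by
        refine add_le_add (h hD hD₀ hvol hψ hψB hρ hlam hv hvle)
          ((abs_setIntegral_mul_le_of_le_of_lt hD hD₀ hvol hψB hρ hlam hule).trans ?_)
        gcongr
        exact le_add_of_nonneg_right (by positivity)
    _ = _ := (add_mul ..).symm

variable (V) in
lemma exists_abs_setIntegral_mul_heat_div_two_pow_sub_le (N : ℕ) :
    ∃ C > 0, ∀ {D f ψ : V → ℝ} {r lam B : ℝ} {L : ℝ≥0}, LipschitzWith 1 D → (∀ x, 0 ≤ D x) →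
      volume {x | 0 < D x} ≠ ⊤ → LipschitzWith L ψ → (∀ x, |ψ x| ≤ B) → 0 < r → 0 ≤ lam →
      Integrable f → HeatGrowthBound r N lam D f → ∀ k : ℕ,
      |(∫ x in {x | D x < r / 2 ^ k}, ψ x * heat ((r / 2 ^ k) ^ 2) f x) -
          ∫ x in {x | D x < r / 2 ^ (k + 1)}, ψ x * heat ((r / 2 ^ (k + 1)) ^ 2) f x| ≤
        C * (B * lam * (∫ x in {x | r / 2 ^ (k + 1) ≤ D x}, r / 2 ^ (k + 1) / D x) +
          L * (r / 2 ^ (k + 1)) * ∫ x, |f x|) := by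
  obtain ⟨C, hC, h⟩ := exists_abs_setIntegral_two_mul_sub_le V N
  refine ⟨C, hC, fun {D f ψ r lam B L} hD hD₀ hvol hψ hψB hr hlam hf hgrowth k ↦ ?_⟩
  have hρ : 0 < r / 2 ^ (k + 1) := by positivity
  have h2ρ : r / 2 ^ k = 2 * (r / 2 ^ (k + 1)) := by rw [pow_succ]; field_simp
  have hsemi : heat ((r / 2 ^ k) ^ 2) f = _ := heat_div_two_pow_sq hr hf k
  have hule := hgrowth k
  rw [hsemi, h2ρ] at hule
  rw [hsemi, h2ρ]
  refine (h hD hD₀ hvol hψ hψB hρ hlam (integrable_heat (pow_pos hρ 2) hf) (hgrowth (k + 1))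
    hule).trans ?_
  gcongr C * (_ + _ * ?_)
  exact integral_abs_heat_le (pow_pos hρ 2) hf

end Telescoping

section PositivitySet

variable {V : Type*} [NormedAddCommGroup V] [InnerProductSpace ℝ V] [FiniteDimensional ℝ V]
  [MeasurableSpace V] [BorelSpace V] {r B lam : ℝ} {N : ℕ} {L : ℝ≥0} {D f ψ : V → ℝ}

lemma tendsto_setIntegral_mul_heat (hD : Measurable D) (hD₀ : ∀ x, 0 ≤ D x)
    (hψ : AEStronglyMeasurable ψ) (hψB : ∀ x, |ψ x| ≤ B) (hr : 0 < r) (hf : Integrable f) :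
    Tendsto (fun k : ℕ ↦ ∫ x in {x | D x < r / 2 ^ k}, ψ x * heat ((r / 2 ^ k) ^ 2) f x) atTop
      (𝓝 (∫ x in {x | D x = 0}, ψ x * f x)) := by
  have hψf : Integrable fun x ↦ ψ x * f x := hf.bdd_mul hψ (.of_forall hψB)
  have hu (k : ℕ) : Integrable (heat ((r / 2 ^ k) ^ 2) f) := integrable_heat (by positivity) hf
  have hrk : Tendsto (fun k : ℕ ↦ r / 2 ^ k) atTop (𝓝 0) :=
    tendsto_const_nhds.div_atTop (tendsto_pow_atTop_atTop_of_one_lt one_lt_two)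
  have hsets : Tendsto (fun k : ℕ ↦ ∫ x in {x | D x < r / 2 ^ k}, ψ x * f x) atTop
      (𝓝 (∫ x in {x | D x = 0}, ψ x * f x)) := by
    have hInter : ⋂ k : ℕ, {x | D x < r / 2 ^ k} = {x | D x = 0} := by
      ext x
      simp only [Set.mem_iInter, Set.mem_ofPred_eq]
      exact ⟨fun h ↦ (hD₀ x).antisymm' (ge_of_tendsto' hrk fun k ↦ (h k).le),
        fun h k ↦ h ▸ by positivity⟩
    rw [← hInter]
    refine tendsto_setIntegral_of_antitone (fun k ↦ measurableSet_lt hD measurable_const)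
      (fun k l hkl x (hx : D x < _) ↦ hx.trans_le ?_) ⟨0, hψf.integrableOn⟩
    gcongr
    exact one_le_two
  have hdiff : Tendsto (fun k : ℕ ↦ ∫ x in {x | D x < r / 2 ^ k},
      ψ x * (heat ((r / 2 ^ k) ^ 2) f x - f x)) atTop (𝓝 0) := by
    have hlim := ((tendsto_integral_abs_heat_sub hf).comp
      (tendsto_div_two_pow_sq_nhdsGT_zero hr)).const_mul B
    rw [mul_zero] at hlim
    refine squeeze_zero_norm (fun k ↦ ?_) hlim
    have habs : Integrable fun x ↦ B * |heat ((r / 2 ^ k) ^ 2) f x - f x| :=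
      ((hu k).sub hf).abs.const_mul B
    have hB : 0 ≤ B := (abs_nonneg _).trans (hψB 0)
    calc _ ≤ ∫ x in {x | D x < r / 2 ^ k}, B * |heat ((r / 2 ^ k) ^ 2) f x - f x| :=
          norm_integral_le_of_norm_le habs.integrableOn (.of_forall fun x ↦ by
            rw [norm_mul]
            exact mul_le_mul_of_nonneg_right (hψB x) (abs_nonneg _))
      _ ≤ ∫ x, B * |heat ((r / 2 ^ k) ^ 2) f x - f x| :=
          setIntegral_le_integral habs (.of_forall fun x ↦ by positivity)
      _ = _ := integral_const_mul _ _
  rw [← zero_add (∫ x in {x | D x = 0}, ψ x * f x)]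
  refine (hdiff.add hsets).congr fun k ↦ ?_
  rw [← integral_add]
  · congr with x; ring
  · exact (((hu k).sub hf).bdd_mul hψ (.of_forall hψB)).integrableOn
  · exact hψf.integrableOn

lemma sum_setIntegral_div_le (hD : Measurable D) (hvol : volume {x | 0 < D x} ≠ ⊤) (hr : 0 < r)
    (n : ℕ) : ∑ k ∈ Finset.range n, ∫ x in {x | r / 2 ^ (k + 1) ≤ D x}, r / 2 ^ (k + 1) / D x ≤
      2 * volume.real {x | 0 < D x} := by
  have hge (k : ℕ) : MeasurableSet {x | r / 2 ^ (k + 1) ≤ D x} :=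
    measurableSet_le measurable_const hD
  have hpos : MeasurableSet {x | 0 < D x} := measurableSet_lt measurable_const hD
  have hInt (k : ℕ) : Integrable ({x | r / 2 ^ (k + 1) ≤ D x}.indicator
      fun x ↦ r / 2 ^ (k + 1) / D x) :=
    (integrable_indicator_iff (hge k)).2 (integrableOn_div hD hvol (by positivity))
  have hle (x : V) : ∑ k ∈ Finset.range n, {x | r / 2 ^ (k + 1) ≤ D x}.indicator
      (fun x ↦ r / 2 ^ (k + 1) / D x) x ≤ {x | 0 < D x}.indicator (fun _ ↦ (2 : ℝ)) x := by
    by_cases hx : 0 < D x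
    · rw [Set.indicator_of_mem (by exact hx)]
      have hsum := sum_div_two_pow_le_min (half_pos hr).le hx n
      simp only [div_div, ← pow_succ'] at hsum
      simp only [Set.indicator_apply, Set.mem_ofPred_eq, div_div]
      refine hsum.trans (mul_le_of_le_one_right zero_le_two ?_)
      exact div_le_one_of_le₀ (min_le_right _ _) hx.le
    · rw [Set.indicator_of_notMem (by exact hx)]
      refine (Finset.sum_eq_zero fun k _ ↦ Set.indicator_of_notMem ?_ _).le
      exact fun hk ↦ hx (lt_of_lt_of_le (by positivity) hk)
  calc _ = ∫ x, ∑ k ∈ Finset.range n, {x | r / 2 ^ (k + 1) ≤ D x}.indicator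
          (fun x ↦ r / 2 ^ (k + 1) / D x) x := by
        rw [integral_finsetSum _ fun k _ ↦ hInt k]
        simp only [integral_indicator (hge _)]
    _ ≤ ∫ x, {x | 0 < D x}.indicator (fun _ ↦ (2 : ℝ)) x :=
        integral_mono (integrable_finsetSum _ fun k _ ↦ hInt k)
          ((integrable_indicator_iff hpos).2 (integrableOn_const hvol)) hle
    _ = _ := by rw [integral_indicator hpos, setIntegral_const, smul_eq_mul, mul_comm]

variable (V) in
lemma exists_abs_integral_mul_sub_setIntegral_le (N : ℕ) :
    ∃ C > 0, ∀ {D f ψ : V → ℝ} {r lam B : ℝ} {L : ℝ≥0}, LipschitzWith 1 D → (∀ x, 0 ≤ D x) →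
      (∀ x, D x < r) → volume {x | 0 < D x} ≠ ⊤ → LipschitzWith L ψ → (∀ x, |ψ x| ≤ B) → 0 < r →
      0 ≤ lam → Integrable f → HeatGrowthBound r N lam D f →
      |(∫ x, ψ x * heat (r ^ 2) f x) - ∫ x in {x | D x = 0}, ψ x * f x| ≤
        C * (B * lam * (2 * volume.real {x | 0 < D x}) + L * r * ∫ x, |f x|) := by
  obtain ⟨C, hC, h⟩ := exists_abs_setIntegral_mul_heat_div_two_pow_sub_le V N
  refine ⟨C, hC, fun {D f ψ r lam B L} hD hD₀ hDr hvol hψ hψB hr hlam hf hgrowth ↦ ?_⟩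
  set I : ℕ → ℝ := fun k ↦ ∫ x in {x | D x < r / 2 ^ k}, ψ x * heat ((r / 2 ^ k) ^ 2) f x
  have hI₀ : I 0 = ∫ x, ψ x * heat (r ^ 2) f x := by
    simp only [I, pow_zero, div_one, hDr, Set.ofPred_true, setIntegral_univ]
  have hB : 0 ≤ B := (abs_nonneg _).trans (hψB 0)
  have hlim := tendsto_setIntegral_mul_heat hD.continuous.measurable hD₀
    hψ.continuous.aestronglyMeasurable hψB hr hf
  have hgeom (n : ℕ) : ∑ k ∈ Finset.range n, r / 2 ^ (k + 1) ≤ r := by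
    calc _ = r / 2 * ∑ k ∈ Finset.range n, (1 / 2 : ℝ) ^ k := by
          rw [Finset.mul_sum]
          refine Finset.sum_congr rfl fun k _ ↦ ?_
          rw [pow_succ, one_div, inv_pow]
          field_simp
      _ ≤ r / 2 * 2 := by gcongr; exact sum_geometric_two_le n
      _ = r := by ring
  rw [← hI₀, ← Real.dist_eq]
  refine le_of_tendsto (tendsto_const_nhds.dist hlim) (.of_forall fun n ↦ ?_)
  calc dist (I 0) (I n)
      ≤ ∑ k ∈ Finset.range n,
          C * (B * lam * (∫ x in {x | r / 2 ^ (k + 1) ≤ D x}, r / 2 ^ (k + 1) / D x) +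
            L * (r / 2 ^ (k + 1)) * ∫ x, |f x|) :=
        dist_le_range_sum_of_dist_le n fun {k} _ ↦
          h hD hD₀ hvol hψ hψB hr hlam hf hgrowth k
    _ = C * (B * lam * (∑ k ∈ Finset.range n,
            ∫ x in {x | r / 2 ^ (k + 1) ≤ D x}, r / 2 ^ (k + 1) / D x) +
          L * (∑ k ∈ Finset.range n, r / 2 ^ (k + 1)) * ∫ x, |f x|) := by
        simp only [Finset.mul_sum, Finset.sum_mul, ← Finset.sum_add_distrib]
    _ ≤ _ := by
        gcongr
        exacts [sum_setIntegral_div_le hD.continuous.measurable hvol hr n, hgeom n]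

variable (V) in
lemma exists_abs_setIntegral_pos_mul_le (N : ℕ) :
    ∃ C > 0, ∀ {D f ψ : V → ℝ} {r lam B : ℝ} {L : ℝ≥0}, LipschitzWith 1 D → (∀ x, 0 ≤ D x) →
      (∀ x, D x < r) → volume {x | 0 < D x} ≠ ⊤ → LipschitzWith L ψ → (∀ x, |ψ x| ≤ B) → 0 < r →
      0 ≤ lam → Integrable f → HeatGrowthBound r N lam D f →
      |∫ x in {x | 0 < D x}, ψ x * f x| ≤
        C * (B * lam * volume.real {x | 0 < D x} + L * r * ∫ x, |f x|) := by
  obtain ⟨C₁, hC₁, h₁⟩ := exists_abs_integral_mul_sub_setIntegral_le V N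
  obtain ⟨C₂, hC₂, h₂⟩ := exists_abs_integral_mul_heat_sub_le V
  refine ⟨2 * C₁ + C₂, by positivity,
    fun {D f ψ r lam B L} hD hD₀ hDr hvol hψ hψB hr hlam hf hgrowth ↦ ?_⟩
  have hB : 0 ≤ B := (abs_nonneg _).trans (hψB 0)
  have hψf : Integrable fun x ↦ ψ x * f x :=
    hf.bdd_mul hψ.continuous.aestronglyMeasurable (.of_forall hψB)
  have hheat : |(∫ x, ψ x * heat (r ^ 2) f x) - ∫ x, ψ x * f x| ≤ C₂ * L * r * ∫ x, |f x| := by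
    have hr2 := pow_pos hr 2
    simpa [heat_const hr2, sqrt_sq hr.le] using
      h₂ (a := fun _ ↦ 1) hr2 hψ hψB aestronglyMeasurable_const (fun _ ↦ abs_one.le) hf
  have hzero := h₁ hD hD₀ hDr hvol hψ hψB hr hlam hf hgrowth
  have hcompl : {x | 0 < D x}ᶜ = {x | D x = 0} := by
    ext x
    exact ⟨fun (hx : ¬0 < D x) ↦ (not_lt.1 hx).antisymm (hD₀ x), fun (hx : D x = 0) ↦ hx.not_gt⟩
  have hsplit : ∫ x in {x | 0 < D x}, ψ x * f x =
      (∫ x, ψ x * f x) - ∫ x in {x | D x = 0}, ψ x * f x := by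
    rw [← hcompl, ← integral_add_compl
      (measurableSet_lt measurable_const hD.continuous.measurable) hψf, add_sub_cancel_right]
  rw [hsplit]
  calc _ ≤ |(∫ x, ψ x * f x) - ∫ x, ψ x * heat (r ^ 2) f x| + _ := abs_sub_le _ _ _
    _ ≤ C₂ * L * r * (∫ x, |f x|) +
          C₁ * (B * lam * (2 * volume.real {x | 0 < D x}) + L * r * ∫ x, |f x|) := by
        rw [abs_sub_comm]
        gcongr
    _ = (2 * C₁) * (B * lam * volume.real {x | 0 < D x}) +
          (C₁ + C₂) * (L * r * ∫ x, |f x|) := by ring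
    _ ≤ (2 * C₁ + C₂) * (B * lam * volume.real {x | 0 < D x}) +
          (2 * C₁ + C₂) * (L * r * ∫ x, |f x|) := by gcongr <;> linarith
    _ = _ := (mul_add ..).symm

end PositivitySet

section WeakConvergence

variable {V : Type*} [NormedAddCommGroup V] [InnerProductSpace ℝ V] [FiniteDimensional ℝ V]
  [MeasurableSpace V] [BorelSpace V] {R : ℝ} {M : ℝ≥0} {f : V → ℝ} {F : ℕ → V → ℝ}

lemma lt_of_volume_pos_lt_volume_ball {D : V → ℝ} {r : ℝ} (hD : LipschitzWith 1 D)
    (hvol : volume {x | 0 < D x} < volume (ball (0 : V) r)) (x : V) : D x < r := by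
  by_contra! hx
  have hsub : ball x r ⊆ {y | 0 < D y} := fun y hy ↦ by
    have hdist := (abs_le.1 (hD.dist_le_mul y x)).1
    rw [NNReal.coe_one, one_mul] at hdist
    exact show 0 < D y by linarith [mem_ball.1 hy]
  refine hvol.not_ge ?_
  rw [← Measure.addHaar_ball_center volume x r]
  exact measure_mono hsub

variable (V) in
lemma exists_exceptional_set [Nontrivial V] :
    ∃ C₁ > 0, ∃ C₂ > 0, ∀ {R r : ℝ} {M : ℝ≥0} {f : V → ℝ} {N : ℕ}, 0 < r → r < R → 0 < N →
      ENNReal.ofReal (C₁ * M / N) < volume (ball (0 : V) r) → Integrable f →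
      ∫⁻ x, heatMaximal R f x ≤ M →
      ∃ O, MeasurableSet O ∧ volume O ≤ ENNReal.ofReal (C₁ * M / N) ∧
        (∀ᵐ x, x ∉ O → |f x| ≤ C₁ * 4 ^ N) ∧
        ∀ {ψ : V → ℝ} {L : ℝ≥0} {B : ℝ}, LipschitzWith L ψ → (∀ x, |ψ x| ≤ B) →
          |∫ x in O, ψ x * f x| ≤ C₂ * (B * (C₁ * M / N) + L * r * M) := by
  obtain ⟨C₁, hC₁, h₁⟩ := exists_heatGrowthBound V
  obtain ⟨C₂, hC₂, h₂⟩ := exists_abs_setIntegral_pos_mul_le V (2 * (Module.finrank ℝ V + 1))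
  refine ⟨C₁, hC₁, C₂, hC₂, fun {R r M f N} hr hrR hN hball hf hfM ↦ ?_⟩
  rw [← ofReal_coe_nnreal] at hfM
  obtain ⟨lam, D, hlam, hlamN, hD, hD₀, hvol, hgrowth⟩ := h₁ hr hrR hN hf hfM
  have hO : volume {x | 0 < D x} ≤ ENNReal.ofReal (C₁ * M / N) :=
    (le_mul_of_one_le_left' (one_le_ofReal.2 hlam)).trans hvol
  refine ⟨{x | 0 < D x}, measurableSet_lt measurable_const hD.continuous.measurable, hO, ?_,
    fun {ψ L B} hψ hψB ↦ ?_⟩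
  · filter_upwards [hgrowth.ae_abs_le hr hf] with x hx hxO
    exact (hx ((not_lt.1 hxO).antisymm (hD₀ x))).trans hlamN
  have hB : 0 ≤ B := (abs_nonneg _).trans (hψB 0)
  have hlam₀ : 0 ≤ lam := zero_le_one.trans hlam
  have hfL1 : ∫ x, |f x| ≤ M := (ofReal_le_ofReal_iff M.2).1 <|
    (ofReal_integral_abs_le_lintegral_heatMaximal (hr.trans hrR) hf).trans hfM
  have hlamO : lam * volume.real {x | 0 < D x} ≤ C₁ * M / N := by
    have := toReal_mono ofReal_ne_top hvol
    rwa [toReal_mul, toReal_ofReal hlam₀, toReal_ofReal (by positivity)] at this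
  calc _ ≤ C₂ * (B * lam * volume.real {x | 0 < D x} + L * r * ∫ x, |f x|) :=
        h₂ hD hD₀ (lt_of_volume_pos_lt_volume_ball hD (hO.trans_lt hball))
          (hO.trans_lt ofReal_lt_top).ne hψ hψB hr hlam₀ hf hgrowth
    _ ≤ _ := by rw [mul_assoc B]; gcongr

lemma exists_small_exceptional_set [Nontrivial V] (hR : 0 < R) {ψ : V → ℝ} {L : ℝ≥0} {B : ℝ}
    (hψ : LipschitzWith L ψ) (hψB : ∀ x, |ψ x| ≤ B) (M : ℝ≥0) {ε : ℝ} (hε : 0 < ε) :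
    ∃ lam : ℝ, ∀ {f : V → ℝ}, Integrable f → ∫⁻ x, heatMaximal R f x ≤ M →
      ∃ O, MeasurableSet O ∧ volume O ≤ ENNReal.ofReal ε ∧
        (∀ᵐ x, x ∉ O → |f x| ≤ lam) ∧ |∫ x in O, ψ x * f x| ≤ ε := by
  obtain ⟨C₁, -, C₂, -, h⟩ := exists_exceptional_set V
  obtain ⟨r, hrε, hrR, hr⟩ : ∃ r, C₂ * (L * r * M) < ε / 2 ∧ r < R ∧ 0 < r := by
    have hcont : Continuous fun r : ℝ ↦ C₂ * (L * r * M) := by fun_prop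
    have hsmall := (hcont.tendsto' 0 0 (by simp)).eventually_lt_const (half_pos hε)
    have hnear : ∀ᶠ r in 𝓝[>] (0 : ℝ), C₂ * (L * r * M) < ε / 2 ∧ r < R :=
      (hsmall.and (eventually_lt_nhds hR)).filter_mono nhdsWithin_le_nhds
    simpa only [and_assoc] using (hnear.and self_mem_nhdsWithin).exists
  have hN₀ : Tendsto (fun N : ℕ ↦ C₁ * M / N) atTop (𝓝 0) :=
    tendsto_const_div_atTop_nhds_zero_nat _
  have hNε : ∀ᶠ N : ℕ in atTop, C₂ * (B * (C₁ * M / N)) < ε / 2 :=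
    ((hN₀.const_mul B).const_mul C₂).eventually_lt_const (by simpa using half_pos hε)
  have hNball : ∀ᶠ N : ℕ in atTop, ENNReal.ofReal (C₁ * M / N) < volume (ball (0 : V) r) :=
    (ENNReal.tendsto_ofReal hN₀).eventually_lt_const <| by
      simpa only [ofReal_zero] using measure_ball_pos volume (0 : V) hr
  obtain ⟨N, hN, hOε, hψε, hball⟩ := ((eventually_gt_atTop 0).and
    ((hN₀.eventually_le_const hε).and (hNε.and hNball))).exists
  refine ⟨C₁ * 4 ^ N, fun {f} hf hfM ↦ ?_⟩
  obtain ⟨O, hO, hOvol, hOf, hOψ⟩ := h hr hrR hN hball hf hfM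
  exact ⟨O, hO, hOvol.trans (ofReal_le_ofReal hOε), hOf, (hOψ hψ hψB).trans (by linarith)⟩

lemma integrable_of_ae_tendsto_of_lintegral_heatMaximal_le (hR : 0 < R)
    (hF : ∀ j, Integrable (F j)) (hM : ∀ j, ∫⁻ x, heatMaximal R (F j) x ≤ M)
    (hlim : ∀ᵐ x, Tendsto (fun j ↦ F j x) atTop (𝓝 (f x))) : Integrable f := by
  refine ⟨aestronglyMeasurable_of_tendsto_ae _ (fun j ↦ (hF j).aestronglyMeasurable) hlim, ?_⟩
  have hle (j : ℕ) : ∫⁻ x, ‖F j x‖ₑ ≤ M :=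
    (lintegral_mono_ae (ae_enorm_le_heatMaximal hR (hF j))).trans (hM j)
  calc ∫⁻ x, ‖f x‖ₑ ≤ ∫⁻ x, liminf (fun j ↦ ‖F j x‖ₑ) atTop :=
        lintegral_mono_ae (hlim.mono fun x hx ↦ hx.enorm.liminf_eq.ge)
    _ ≤ liminf (fun j ↦ ∫⁻ x, ‖F j x‖ₑ) atTop :=
        lintegral_liminf_le' fun j ↦ (hF j).aestronglyMeasurable.enorm
    _ ≤ M := liminf_le_of_frequently_le' (.of_forall hle)
    _ < ⊤ := coe_lt_top

theorem tendsto_integral_mul_of_lintegral_heatMaximal_le [Nontrivial V] (hR : 0 < R)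
    (hF : ∀ j, Integrable (F j)) (hM : ∀ j, ∫⁻ x, heatMaximal R (F j) x ≤ M)
    (hlim : ∀ᵐ x, Tendsto (fun j ↦ F j x) atTop (𝓝 (f x))) {ψ : V → ℝ} {L : ℝ≥0} {B : ℝ}
    (hψ : LipschitzWith L ψ) (hψB : ∀ x, |ψ x| ≤ B) (hψint : Integrable ψ) :
    Tendsto (fun j ↦ ∫ x, ψ x * F j x) atTop (𝓝 (∫ x, ψ x * f x)) := by
  have hmul {g : V → ℝ} (hg : Integrable g) : Integrable fun x ↦ ψ x * g x :=
    hg.bdd_mul hψ.continuous.aestronglyMeasurable (.of_forall hψB)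
  refine tendsto_integral_of_dominated_off_small (fun j ↦ hmul (hF j))
    (hmul (integrable_of_ae_tendsto_of_lintegral_heatMaximal_le hR hF hM hlim))
    (hlim.mono fun x hx ↦ hx.const_mul (ψ x)) fun ε hε ↦ ?_
  obtain ⟨lam, h⟩ := exists_small_exceptional_set hR hψ hψB M hε
  refine ⟨fun x ↦ |ψ x| * lam, hψint.abs.mul_const lam, fun j ↦ ?_⟩
  obtain ⟨O, hO, hOε, hOlam, hOψ⟩ := h (hF j) (hM j)
  refine ⟨O, hO, hOε, hOlam.mono fun x hx hxO ↦ ?_, hOψ⟩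
  rw [abs_mul]
  exact mul_le_mul_of_nonneg_left (hx hxO) (abs_nonneg _)

theorem lintegral_heatMaximal_le_liminf [Nontrivial V] (hR : 0 < R)
    (hF : ∀ j, Integrable (F j)) (hM : ∀ j, ∫⁻ x, heatMaximal R (F j) x ≤ M)
    (hlim : ∀ᵐ x, Tendsto (fun j ↦ F j x) atTop (𝓝 (f x))) :
    ∫⁻ x, heatMaximal R f x ≤ liminf (fun j ↦ ∫⁻ x, heatMaximal R (F j) x) atTop := by
  have hheat (x : V) {t : ℝ} (ht : 0 < t) :
      Tendsto (fun j ↦ heat (t ^ 2) (F j) x) atTop (𝓝 (heat (t ^ 2) f x)) := by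
    obtain ⟨L, hL⟩ := exists_lipschitzWith_heatKernel (V := V) (pow_pos ht 2)
    exact tendsto_integral_mul_of_lintegral_heatMaximal_le hR hF hM hlim
      (hL.comp (IsometryEquiv.subLeft x).isometry.lipschitz)
      (abs_heatKernel_le (pow_pos ht 2) <| x - ·)
      ((integrable_heatKernel (pow_pos ht 2)).comp_sub_left x)
  refine le_trans (lintegral_mono fun x ↦ iSup₂_le fun t ht ↦ ?_)
    (lintegral_liminf_le fun j ↦ measurable_heatMaximal (hF j) R)
  rw [← (hheat x ht.1).enorm.liminf_eq]
  exact liminf_le_liminf (.of_forall fun j ↦ enorm_heat_le_heatMaximal ht.1 ht.2 (F j) x)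

end WeakConvergence

lemma MnMax_eq_heatMaximal (d : ℕ) (n : ℤ) (f : E d → ℝ) :
    MnMax d n f = heatMaximal (2 ^ (-(n : ℝ) / 2)) f := by
  ext x
  refine iSup_congr fun t ↦ iSup_congr fun ht ↦ ?_
  simp only [heat, heatKernel_sq ht.1, finrank_euclideanSpace_fin, Real.enorm_eq_ofReal_abs, gaussP]

theorem stmt17_general (d : ℕ) (hd : 0 < d) (n : ℤ) (f : E d → ℝ) (fj : ℕ → E d → ℝ)
    (hmem : ∀ j, Memh1n d n (fj j)) (M : ℝ) (hM : ∀ j, (h1nNorm d n (fj j)).toReal ≤ M)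
    (hae : ∀ᵐ x, Tendsto (fun j ↦ fj j x) atTop (𝓝 (f x))) :
    Memh1n d n f ∧ h1nNorm d n f ≤ liminf (fun j ↦ h1nNorm d n (fj j)) atTop ∧
      ∀ (φ : E d → ℝ) (L : ℝ≥0) (B : ℝ), LipschitzWith L φ → (∀ x, |φ x| ≤ B) → Integrable φ →
        Tendsto (fun j ↦ ∫ x, fj j x * φ x) atTop (𝓝 (∫ x, f x * φ x)) := by
  have : Nonempty (Fin d) := ⟨⟨0, hd⟩⟩
  have hR : (0 : ℝ) < 2 ^ (-(n : ℝ) / 2) := by positivity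
  have hbound (j : ℕ) : h1nNorm d n (fj j) ≤ M.toNNReal :=
    (le_ofReal_iff_toReal_le (hmem j).2.ne (toReal_nonneg.trans (hM j))).2 (hM j)
  simp only [Memh1n, h1nNorm, MnMax_eq_heatMaximal] at *
  have hInt (j : ℕ) : Integrable (fj j) := (hmem j).1
  have hlsc := lintegral_heatMaximal_le_liminf hR hInt hbound hae
  refine ⟨⟨integrable_of_ae_tendsto_of_lintegral_heatMaximal_le hR hInt hbound hae, ?_⟩, hlsc,
    fun φ L B hφ hφB hφint ↦ ?_⟩
  · exact (hlsc.trans (liminf_le_of_frequently_le' (.of_forall hbound))).trans_lt coe_lt_top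
  · simpa only [mul_comm] using
      tendsto_integral_mul_of_lintegral_heatMaximal_le hR hInt hbound hae hφ hφB hφint

/-- Weak`*`-convergence in `h^1_n`: a bounded sequence in `h^1_n` converging a.e.
has limit in `h^1_n`, with norm at most the liminf of the norms, and converges against
every `φ ∈ C_c^∞`. -/
theorem stmt17 (d : ℕ) (hd : 3 ≤ d) (n : ℤ) (f : E d → ℝ) (fj : ℕ → E d → ℝ)
    (hmem : ∀ j, Memh1n d n (fj j))
    (M : ℝ) (hM : ∀ j, (h1nNorm d n (fj j)).toReal ≤ M)
    (hae : ∀ᵐ x ∂(volume : Measure (E d)),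
      Filter.Tendsto (fun j => fj j x) Filter.atTop (nhds (f x))) :
    Memh1n d n f ∧
    h1nNorm d n f ≤ Filter.liminf (fun j => h1nNorm d n (fj j)) Filter.atTop ∧
    ∀ φ : E d → ℝ, ContDiff ℝ (⊤ : ℕ∞) φ → HasCompactSupport φ →
      Filter.Tendsto (fun j => ∫ x, fj j x * φ x) Filter.atTop
        (nhds (∫ x, f x * φ x)) := by
  obtain ⟨hf, hle, hlim⟩ := stmt17_general d (by omega) n f fj hmem M hM hae
  refine ⟨hf, hle, fun φ hφ hφc ↦ ?_⟩
  obtain ⟨L, hL⟩ := hφ.lipschitzWith_of_hasCompactSupport hφc (by simp)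
  obtain ⟨B, hB⟩ := hL.continuous.bounded_above_of_compact_support hφc
  exact hlim φ L B hL hB (hL.continuous.integrable_of_hasCompactSupport hφc)
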